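/- arXiv:1109.5199 — 3 statements merged into one kernel-verified Lean document; each statement's English description precedes it below -/
import Mathlib

section
/- Suppose 1/s₁ + 1/s₂ < 1 and set k₁(a) = ⌊2k(a)/3⌋. Then lim_{a→0⁺} W_a^{k₁(a)}(1/2) = 1/2. -/
open MeasureTheory Filter Topology

/-- The W-like map `W_a` with parameters `s₁ s₂ p q r` and perturbation `a`. -/
noncomputable def Wmap (s₁ s₂ p q r a : ℝ) (x : ℝ) : ℝ :=
  if x < 1/2 - (1/2 + r*a)/(s₁ + p*a) then
    1 - (2*(s₁ + p*a)/(s₁ - 1 + p*a - 2*r*a)) * x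
  else if x < 1/2 then
    (s₁ + p*a)*(x - 1/2) + 1/2 + r*a
  else if x < 1/2 + (1/2 + r*a)/(s₂ + q*a) then
    -(s₂ + q*a)*(x - 1/2) + 1/2 + r*a
  else
    1 + (2*(s₂ + q*a)/(s₂ - 1 + q*a - 2*r*a)) * (x - 1)

/-- `k(a)`: the first iterate `j ≥ 1` at which the trajectory of `1/2` under `W_a`
drops below `1/2 − (1/2+ra)/(s₁+pa)`. -/
noncomputable def kIndex (s₁ s₂ p q r a : ℝ) : ℕ :=
  sInf {j : ℕ | 1 ≤ j ∧
    (Wmap s₁ s₂ p q r a)^[j] (1/2) ≤ 1/2 - (1/2 + r*a)/(s₁ + p*a)}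

/-- `k₁(a) = ⌊2k(a)/3⌋`, the integer part of `2k(a)/3`. -/
noncomputable def kIndex1 (s₁ s₂ p q r a : ℝ) : ℕ :=
  2 * kIndex s₁ s₂ p q r a / 3

theorem Wmap_aux_bound
    (s₁ s₂ p q r a : ℝ) (hs₁ : 1 < s₁) (hs₂ : 1 < s₂)
    (hp : 0 < p) (hq : 0 < q) (hr : 0 < r)
    (hsum : 1/s₁ + 1/s₂ < 1) (ha : 0 < a) (hsmall : (s₂ + q*a)*(r*a) < 1/2) :
    |(Wmap s₁ s₂ p q r a)^[kIndex1 s₁ s₂ p q r a] (1/2) - 1/2| ≤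
      r*a + r*a/(s₁-1) + (r*a*(s₂+q*a))^((1:ℝ)/3) := by
  have hpa : 0 < p*a := mul_pos hp ha
  have hqa : 0 < q*a := mul_pos hq ha
  have hra : 0 < r*a := mul_pos hr ha
  have hS : s₁ + s₂ < s₁ * s₂ := by
    have h1 : 1/s₁ + 1/s₂ = (s₁+s₂)/(s₁*s₂) := by field_simp; ring
    rw [h1, div_lt_one (by positivity)] at hsum
    exact hsum
  have hra2 : r*a < 1/2 := by nlinarith
  have hE : 0 ≤ (r*a*(s₂+q*a))^((1:ℝ)/3) := by positivity
  have hdiv : 0 ≤ r*a/(s₁-1) := div_nonneg hra.le (by linarith)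
  set W := Wmap s₁ s₂ p q r a with hW
  set k := kIndex s₁ s₂ p q r a with hk
  have hk1 : kIndex1 s₁ s₂ p q r a = 2*k/3 := rfl
  rw [hk1]
  set σ := s₁ + p*a with hσ
  set τ := s₂ + q*a with hτ
  have hσ1 : 1 < σ := by linarith
  have hτ1 : 1 < τ := by linarith
  have hST : σ + τ < σ * τ := by nlinarith [mul_pos hpa hqa]
  have hthr : 0 < (1/2 + r*a)/σ := by positivity
  have hthr1 : (1/2 + r*a)/σ ≤ 1 := by rw [div_le_one (by linarith)]; linarith
  have hx1 : W (1/2) = 1/2 + r*a := by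
    have h0 : 0 < (1/2 + r*a)/τ := by positivity
    rw [hW]; unfold Wmap
    rw [if_neg (by rw [← hσ]; linarith), if_neg (lt_irrefl _), if_pos (by rw [← hτ]; linarith)]
    ring
  have hx2 : W (W (1/2)) = 1/2 + r*a - τ*(r*a) := by
    have h0 : r*a < (1/2 + r*a)/τ := by
      rw [lt_div_iff₀ (by linarith)]; nlinarith
    rw [hx1, hW]; unfold Wmap
    rw [if_neg (by rw [← hσ]; linarith), if_neg (by linarith), if_pos (by rw [← hτ]; linarith)]
    ring
  have hnot : ∀ j, 1 ≤ j → j < k → 1/2 - (1/2 + r*a)/σ < W^[j] (1/2) := by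
    intro j hj hjk
    have := Nat.notMem_of_lt_sInf hjk
    by_contra hc
    exact this ⟨hj, not_lt.mp hc⟩
  set δ := τ - σ/(σ-1) with hδ
  have hfr : σ/(σ-1) < τ := by rw [div_lt_iff₀ (by linarith)]; nlinarith
  have hfr0 : 0 < σ/(σ-1) := div_pos (by linarith) (by linarith)
  have hδ0 : 0 < δ := by linarith
  set d := r*a*δ with hd
  have hd0 : 0 < d := mul_pos hra hδ0
  have hdle : d ≤ r*a*τ := by
    apply mul_le_mul_of_nonneg_left _ hra.le; linarith
  have hfd : 0 < r*a/(σ-1) := div_pos hra (by linarith)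
  have hform : ∀ j, j + 3 ≤ k → W^[j+2] (1/2) = 1/2 - r*a/(σ-1) - d*σ^j := by
    intro j
    induction j with
    | zero =>
      intro _
      have : W^[0+2] (1/2) = W (W (1/2)) := rfl
      rw [this, hx2, hd, hδ]
      have : σ - 1 ≠ 0 := by linarith
      field_simp
      ring
    | succ j ih =>
      intro hj
      have h1 := ih (by omega)
      have h2 := hnot (j+2) (by omega) (by omega)
      have h3 : W^[j+1+2] (1/2) = W (W^[j+2] (1/2)) := by
        exact Function.iterate_succ_apply' W (j+2) (1/2)
      have h4 : 0 < d*σ^j := by positivity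
      have h5 : W^[j+2] (1/2) < 1/2 := by rw [h1]; linarith
      have h6 : W (W^[j+2] (1/2)) = σ*(W^[j+2] (1/2) - 1/2) + 1/2 + r*a := by
        generalize W^[j+2] (1/2) = x at *
        rw [hW]; unfold Wmap
        rw [if_neg (by rw [← hσ]; linarith), if_pos h5]
      rw [h3, h6, h1]
      have : σ - 1 ≠ 0 := by linarith
      field_simp
      ring
  rcases lt_or_ge k 3 with hk3 | hk3
  · have : 2*k/3 = 0 ∨ 2*k/3 = 1 := by omega
    rcases this with h | h <;> rw [h]
    · simp only [Function.iterate_zero, id, sub_self, abs_zero]; linarith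
    · rw [Function.iterate_one, hx1, add_sub_cancel_left, abs_of_pos hra]; linarith
  · obtain ⟨m, hm⟩ : ∃ m, k = m + 3 := ⟨k - 3, by omega⟩
    obtain ⟨n, hn⟩ : ∃ n, 2*k/3 = n + 2 := ⟨2*k/3 - 2, by omega⟩
    have hnm : 3*n ≤ 2*m := by omega
    have hM := hnot (m+2) (by omega) (by omega)
    rw [hform m (by omega)] at hM
    have hM1 : d*σ^m ≤ 1 := by linarith
    have hM0 : 0 < d*σ^m := by positivity
    have hN0 : 0 < d*σ^n := by positivity
    rw [hn, hform n (by omega)]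
    have hcube : (d*σ^n)^3 ≤ r*a*τ := by
      calc (d*σ^n)^3 = d^3*σ^(3*n) := by ring
        _ ≤ d^3*σ^(2*m) := by gcongr; exact hσ1.le
        _ = d*(d*σ^m)^2 := by ring
        _ ≤ d*1 := by gcongr; exact pow_le_one₀ hM0.le hM1
        _ ≤ r*a*τ := by linarith
    have hroot : d*σ^n ≤ (r*a*τ)^((1:ℝ)/3) := by
      have h := Real.rpow_le_rpow (by positivity) hcube (by norm_num : (0:ℝ) ≤ 1/3)
      rw [← Real.rpow_natCast, ← Real.rpow_mul hN0.le] at h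
      norm_num at h
      norm_num
      exact h
    have hdd : r*a/(σ-1) ≤ r*a/(s₁-1) := by
      apply div_le_div_of_nonneg_left hra.le <;> linarith
    rw [abs_le]
    constructor <;> linarith

/-- Lemma 5(IV): if `1/s₁ + 1/s₂ < 1`, then `W_a^{k₁(a)}(1/2) → 1/2` as `a → 0⁺`,
where `k₁(a) = ⌊2k(a)/3⌋`. -/
theorem Wmap_iterate_k1_tendsto_half_lt_one
    (s₁ s₂ p q r : ℝ) (hs₁ : 1 < s₁) (hs₂ : 1 < s₂)
    (hp : 0 < p) (hq : 0 < q) (hr : 0 < r)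
    (hsum : 1/s₁ + 1/s₂ < 1) :
    Tendsto (fun a => (Wmap s₁ s₂ p q r a)^[kIndex1 s₁ s₂ p q r a] (1/2))
      (𝓝[>] (0:ℝ)) (𝓝 (1/2)) := by
  have hlim : Tendsto (fun a : ℝ => r*a + r*a/(s₁-1) + (r*a*(s₂+q*a))^((1:ℝ)/3))
      (𝓝[>] (0:ℝ)) (𝓝 0) := by
    have hc : Continuous (fun a : ℝ => r*a + r*a/(s₁-1) + (r*a*(s₂+q*a))^((1:ℝ)/3)) := by
      apply Continuous.add (by fun_prop)
      exact Continuous.rpow_const (by fun_prop) (fun _ => Or.inr (by norm_num))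
    have h := hc.tendsto 0
    norm_num at h
    norm_num
    exact h.mono_left nhdsWithin_le_nhds
  have hsm : ∀ᶠ a in 𝓝[>] (0:ℝ), (s₂ + q*a)*(r*a) < 1/2 := by
    have hc : Continuous (fun a : ℝ => (s₂ + q*a)*(r*a)) := by fun_prop
    have h := (hc.tendsto 0).mono_left (nhdsWithin_le_nhds (s := Set.Ioi 0))
    exact h.eventually_lt_const (by norm_num)
  rw [tendsto_iff_dist_tendsto_zero]
  refine squeeze_zero' (Eventually.of_forall fun _ => dist_nonneg) ?_ hlim
  filter_upwards [hsm, self_mem_nhdsWithin] with a h1 h2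
  rw [Real.dist_eq]
  exact Wmap_aux_bound s₁ s₂ p q r a hs₁ hs₂ hp hq hr hsum h2 h1
end

section
/- Suppose 1/s₁ + 1/s₂ ≤ 1, and suppose there exist a₀ > 0 and M > 0 such that for all 0 < a < a₀ the normalized invariant density h_a of W_a satisfies h_a ≤ M Lebesgue-almost everywhere. Then h_a → h_0 in L¹([0,1], λ) as a → 0⁺, where h_0 is the normalized invariant density of W_0. -/
open MeasureTheory Filter Topology

/-- The invariant density of the unperturbed Markov map `W₀`. -/
noncomputable def h0 (s₁ s₂ : ℝ) (x : ℝ) : ℝ :=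
  if x < 1/2 then 2*s₁*(s₂+1)/(2*s₁*s₂+s₁-s₂) else 2*s₂*(s₁-1)/(2*s₁*s₂+s₁-s₂)

noncomputable abbrev lam : Measure ℝ := volume.restrict (Set.Icc (0:ℝ) 1)

lemma bdd_int {ν : Measure ℝ} [IsFiniteMeasure ν] {u : ℝ → ℝ} {K : ℝ} (hm : Measurable u)
    (hb : ∀ x, |u x| ≤ K) : Integrable u ν :=
  Integrable.of_bound hm.aestronglyMeasurable K (Eventually.of_forall hb)

lemma bdd_ii {u : ℝ → ℝ} {K : ℝ} (hm : Measurable u)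
    (hb : ∀ x, |u x| ≤ K) (a b : ℝ) : IntervalIntegrable u volume a b := by
  constructor <;> exact bdd_int hm hb

lemma weak_sets (u : ℕ → ℝ → ℝ) (hm : ∀ n, Measurable (u n)) (hb : ∀ n x, |u n x| ≤ 1)
    (hc : ∀ x ∈ Set.Icc (0:ℝ) 1, Tendsto (fun n => ∫ y in (0:ℝ)..x, u n y) atTop (𝓝 0))
    (A : Set ℝ) (hA : MeasurableSet A) :
    Tendsto (fun n => ∫ y in A, u n y ∂lam) atTop (𝓝 0) := by
  have hI : ∀ n, Integrable (u n) lam := fun n => bdd_int (hm n) (hb n)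
  have hIic : ∀ x : ℝ, Tendsto (fun n => ∫ y in Set.Iic x, u n y ∂lam) atTop (𝓝 0) := by
    intro x
    rcases lt_or_ge x 0 with hx | hx
    · have : ∀ n, ∫ y in Set.Iic x, u n y ∂lam = 0 := by
        intro n
        rw [Measure.restrict_restrict measurableSet_Iic]
        have : Set.Iic x ∩ Set.Icc (0:ℝ) 1 = ∅ := by
          ext y; simp; intro h1 h2; linarith
        rw [this]; simp
      simp only [this]; exact tendsto_const_nhds
    · have hx' : min x 1 ∈ Set.Icc (0:ℝ) 1 := ⟨le_min hx zero_le_one, min_le_right _ _⟩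
      refine (hc _ hx').congr fun n => ?_
      rw [Measure.restrict_restrict measurableSet_Iic]
      have : Set.Iic x ∩ Set.Icc (0:ℝ) 1 = Set.Icc 0 (min x 1) := by
        ext y; simp; tauto
      rw [this, intervalIntegral.integral_of_le hx'.1, integral_Icc_eq_integral_Ioc]
  have huniv : Tendsto (fun n => ∫ y, u n y ∂lam) atTop (𝓝 0) := by
    refine (hc 1 (by simp)).congr fun n => ?_
    rw [intervalIntegral.integral_of_le zero_le_one, integral_Icc_eq_integral_Ioc]
  induction A, hA using MeasurableSpace.induction_on_inter (borel_eq_generateFrom_Iic ℝ ▸ BorelSpace.measurable_eq) isPiSystem_Iic with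
  | empty => simp
  | basic t ht => obtain ⟨x, rfl⟩ := ht; exact hIic x
  | compl t ht ih =>
    have := huniv.sub ih
    simp only [sub_zero] at this
    refine this.congr fun n => ?_
    rw [← integral_add_compl ht (hI n)]; ring
  | iUnion f hd hf ih =>
    have h1 : ∀ n, ∫ y in ⋃ i, f i, u n y ∂lam = ∑' i, ∫ y in f i, u n y ∂lam := fun n =>
      integral_iUnion hf hd (hI n).integrableOn
    simp only [h1]
    have h2 : Summable fun i => lam.real (f i) := by
      apply ENNReal.summable_toReal
      rw [← measure_iUnion hd hf]
      exact measure_ne_top _ _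
    have := tendsto_tsum_of_dominated_convergence (𝓕 := atTop) (f := fun n i => ∫ y in f i, u n y ∂lam)
      (g := fun _ => 0) h2 (fun i => ih i) (Eventually.of_forall fun n i => by
        have := norm_setIntegral_le_of_norm_le_const (μ := lam) (s := f i) (f := u n) (C := 1) (measure_lt_top _ _) (fun x _ => hb n x)
        simpa using this)
    simpa using this

lemma weak_f (u : ℕ → ℝ → ℝ) (hm : ∀ n, Measurable (u n)) (hb : ∀ n x, |u n x| ≤ 1)
    (hc : ∀ x ∈ Set.Icc (0:ℝ) 1, Tendsto (fun n => ∫ y in (0:ℝ)..x, u n y) atTop (𝓝 0))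
    (f : ℝ → ℝ) (hf : Integrable f lam) :
    Tendsto (fun n => ∫ y, f y * u n y ∂lam) atTop (𝓝 0) := by
  have hmul : ∀ (f : ℝ → ℝ), Integrable f lam → ∀ n, Integrable (fun y => f y * u n y) lam := by
    intro f hf n
    exact hf.mul_bdd (c := 1) (hm n).aestronglyMeasurable (Eventually.of_forall (hb n))
  refine Integrable.induction (fun f => Tendsto (fun n => ∫ y, f y * u n y ∂lam) atTop (𝓝 0)) ?_ ?_ ?_ ?_ hf
  · intro c s hs _
    have := (weak_sets u hm hb hc s hs).const_mul c
    simp only [mul_zero] at this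
    refine this.congr fun n => ?_
    rw [← integral_const_mul, ← integral_indicator hs]
    congr 1; ext y
    by_cases hy : y ∈ s <;> simp [hy]
  · intro f g _ hf hg ihf ihg
    have := ihf.add ihg
    simp only [add_zero] at this
    refine this.congr fun n => ?_
    rw [← integral_add (hmul f hf n) (hmul g hg n)]
    congr 1; ext y; simp; ring
  ·
    rw [← isSeqClosed_iff_isClosed]
    intro F F0 hF hFF
    simp only [Set.mem_ofPred_eq] at hF ⊢
    rw [Metric.tendsto_atTop]
    intro ε hε
    rw [tendsto_iff_dist_tendsto_zero] at hFF
    obtain ⟨k, hk⟩ := (hFF.eventually (gt_mem_nhds (half_pos hε))).exists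
    obtain ⟨N, hN⟩ := Metric.tendsto_atTop.1 (hF k) (ε/2) (half_pos hε)
    refine ⟨N, fun n hn => ?_⟩
    have h1 := hN n hn
    rw [Real.dist_eq, sub_zero] at h1 ⊢
    have hi : Integrable (F k) lam := L1.integrable_coeFn _
    have hi0 : Integrable F0 lam := L1.integrable_coeFn _
    have h2 : |∫ y, F0 y * u n y ∂lam - ∫ y, F k y * u n y ∂lam| ≤ dist (F k) F0 := by
      rw [← integral_sub (hmul _ hi0 n) (hmul _ hi n), L1.dist_eq_integral_dist]
      refine (abs_integral_le_integral_abs).trans ?_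
      refine integral_mono_of_nonneg (Eventually.of_forall fun _ => abs_nonneg _) ?_ (Eventually.of_forall fun y => ?_)
      · simp only [Real.dist_eq]; exact (hi.sub hi0).abs
      · simp only [Real.dist_eq, ← sub_mul, abs_mul]
        rw [abs_sub_comm (F k y)]
        exact mul_le_of_le_one_right (abs_nonneg _) (hb n y)
    have := abs_sub_abs_le_abs_sub (∫ y, F0 y * u n y ∂lam) (∫ y, F k y * u n y ∂lam)
    linarith
  · intro f g hfg hf ih
    refine ih.congr fun n => ?_
    apply integral_congr_ae
    filter_upwards [hfg] with y hy
    rw [hy]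

lemma weak_eps (f : ℝ → ℝ) (hf : Integrable f lam) (ε : ℝ) (hε : 0 < ε) :
    ∃ δ > 0, ∀ u : ℝ → ℝ, Measurable u → (∀ x, |u x| ≤ 1) →
      (∀ x ∈ Set.Icc (0:ℝ) 1, |∫ y in (0:ℝ)..x, u y| ≤ δ) → |∫ y, f y * u y ∂lam| ≤ ε := by
  by_contra! H
  choose u hm hb hx hgt using fun n : ℕ => H (1/(n+1)) (by positivity)
  have := weak_f u hm hb (fun x hx' => squeeze_zero_norm (fun n => hx n x hx') tendsto_one_div_add_atTop_nhds_zero_nat) f hf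
  obtain ⟨N, hN⟩ := Metric.tendsto_atTop.1 this ε hε
  have h1 := hN N le_rfl
  rw [Real.dist_eq, sub_zero] at h1
  linarith [hgt N]


noncomputable def Wm (s t e b c x : ℝ) : ℝ :=
  if x < b then 1 - b⁻¹ * x
  else if x < 1/2 then s * x + (1/2 + e - s/2)
  else if x < 1 - c then (1/2 + e + t/2) - t * x
  else c⁻¹ * x + (1 - c⁻¹)

structure WP (s t e b c θ : ℝ) : Prop where
  s0 : 1 < s
  t0 : 1 < t
  e0 : 0 ≤ e
  e1 : e ≤ 1/2
  b0 : 0 < b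
  c0 : 0 < c
  b1 : b < 1/2
  c1 : c < 1/2
  hb : s * b = (s-1)/2 - e
  hc : t * c = (t-1)/2 - e
  bθ : b ≤ θ
  cθ : c ≤ θ
  sθ : s⁻¹ ≤ θ
  tθ : t⁻¹ ≤ θ
  θ1 : θ < 1

lemma Wm_meas (s t e b c : ℝ) : Measurable (Wm s t e b c) := by
  unfold Wm
  refine Measurable.ite measurableSet_Iio (by fun_prop) ?_
  refine Measurable.ite measurableSet_Iio (by fun_prop) ?_
  exact Measurable.ite measurableSet_Iio (by fun_prop) (by fun_prop)

lemma ii_congr {f g : ℝ → ℝ} {x y : ℝ} (hxy : x ≤ y) (h : ∀ z, x ≤ z → z < y → f z = g z) :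
    ∫ z in x..y, f z = ∫ z in x..y, g z := by
  rw [intervalIntegral.integral_of_le hxy, intervalIntegral.integral_of_le hxy,
    ← integral_Ico_eq_integral_Ioc, ← integral_Ico_eq_integral_Ioc]
  exact setIntegral_congr_fun measurableSet_Ico fun z hz => h z hz.1 hz.2

section prim
variable {s t e b c θ : ℝ} {u : ℝ → ℝ} {K : ℝ}

lemma prim1 (w : WP s t e b c θ) {x : ℝ} (hx0 : 0 ≤ x) (hx : x ≤ b) :
    ∫ y in (0:ℝ)..x, u (Wm s t e b c y) = b * ∫ y in (1 - b⁻¹ * x)..1, u y := by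
  have h0 := w.b0
  rw [ii_congr (g := fun y => u (1 - b⁻¹ * y)) hx0 (fun z hz hz' => by
    have : z < b := by linarith
    simp [Wm, this])]
  rw [intervalIntegral.integral_comp_sub_mul _ (by positivity)]
  simp

lemma prim2 (w : WP s t e b c θ) {x : ℝ} (hx0 : b ≤ x) (hx : x ≤ 1/2) :
    ∫ y in b..x, u (Wm s t e b c y) = s⁻¹ * ∫ y in (0:ℝ)..(s * x + (1/2 + e - s/2)), u y := by
  have h0 := w.s0
  have hb := w.hb
  rw [ii_congr (g := fun y => u (s * y + (1/2 + e - s/2))) hx0 (fun z hz hz' => by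
    have h1 : ¬ z < b := by linarith
    have h2 : z < 1/2 := by linarith
    simp only [Wm, h1, h2, if_true, if_false])]
  rw [intervalIntegral.integral_comp_mul_add _ (by positivity)]
  have : s * b + (1/2 + e - s/2) = 0 := by rw [hb]; ring
  rw [this]; simp

lemma prim3 (w : WP s t e b c θ) {x : ℝ} (hx0 : 1/2 ≤ x) (hx : x ≤ 1 - c) :
    ∫ y in x..(1-c), u (Wm s t e b c y) = t⁻¹ * ∫ y in (0:ℝ)..((1/2 + e + t/2) - t * x), u y := by
  have h0 := w.t0
  have hc := w.hc
  have hb1 := w.b1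
  rw [ii_congr (g := fun y => u ((1/2 + e + t/2) - t * y)) hx (fun z hz hz' => by
    have h1 : ¬ z < b := by linarith
    have h2 : ¬ z < 1/2 := by linarith
    simp only [Wm, h1, h2, hz', if_true, if_false])]
  rw [intervalIntegral.integral_comp_sub_mul _ (by positivity)]
  have : (1/2 + e + t/2) - t * (1 - c) = 0 := by rw [mul_sub, hc]; ring
  rw [this]; simp

lemma prim4 (w : WP s t e b c θ) {x : ℝ} (hx0 : 1 - c ≤ x) (hx : x ≤ 1) :
    ∫ y in x..1, u (Wm s t e b c y) = c * ∫ y in (c⁻¹ * x + (1 - c⁻¹))..1, u y := by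
  have h0 := w.c0
  have hb1 := w.b1
  have hc1 := w.c1
  rw [ii_congr (g := fun y => u (c⁻¹ * y + (1 - c⁻¹))) hx (fun z hz hz' => by
    have h1 : ¬ z < b := by linarith
    have h2 : ¬ z < 1/2 := by linarith
    have h3 : ¬ z < 1 - c := by linarith
    simp only [Wm, h1, h2, h3, if_false])]
  rw [intervalIntegral.integral_comp_mul_add _ (by positivity)]
  simp

lemma half_left (w : WP s t e b c θ) (hm : Measurable u) (hK : ∀ x, |u x| ≤ K) :
    ∫ y in (0:ℝ)..(1/2), u (Wm s t e b c y) =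
      b * (∫ y in (0:ℝ)..1, u y) + s⁻¹ * ∫ y in (0:ℝ)..(1/2+e), u y := by
  have hi : ∀ x y, IntervalIntegrable (fun y => u (Wm s t e b c y)) volume x y := bdd_ii (hm.comp (Wm_meas s t e b c)) (fun x => hK _)
  rw [← intervalIntegral.integral_add_adjacent_intervals (hi 0 b) (hi b (1/2))]
  have h1 := prim1 (u := u) w w.b0.le le_rfl
  have h2 := prim2 (u := u) w w.b1.le le_rfl
  rw [inv_mul_cancel₀ w.b0.ne', sub_self] at h1
  rw [show s * (1/2) + (1/2 + e - s/2) = 1/2+e by ring] at h2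
  rw [h1, h2]

lemma half_right (w : WP s t e b c θ) (hm : Measurable u) (hK : ∀ x, |u x| ≤ K) :
    ∫ y in (1/2:ℝ)..1, u (Wm s t e b c y) =
      c * (∫ y in (0:ℝ)..1, u y) + t⁻¹ * ∫ y in (0:ℝ)..(1/2+e), u y := by
  have hi : ∀ x y, IntervalIntegrable (fun y => u (Wm s t e b c y)) volume x y := bdd_ii (hm.comp (Wm_meas s t e b c)) (fun x => hK _)
  rw [← intervalIntegral.integral_add_adjacent_intervals (hi (1/2) (1-c)) (hi (1-c) 1)]
  have h1 := prim4 (u := u) w le_rfl (by linarith [w.c0])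
  have h2 := prim3 (u := u) w le_rfl (by linarith [w.c1])
  have := w.c0.ne'
  rw [show c⁻¹ * (1-c) + (1 - c⁻¹) = 0 by field_simp; ring] at h1
  rw [show 1/2 + e + t/2 - t * (1/2) = 1/2+e by ring] at h2
  rw [h1, h2]; ring

lemma tail_le (hm : Measurable u) (hK : ∀ x, |u x| ≤ K) {ν : ℝ}
    (hν : ∀ x ∈ Set.Icc (0:ℝ) 1, |∫ y in (0:ℝ)..x, u y| ≤ ν) (h0 : ∫ y in (0:ℝ)..1, u y = 0)
    (x : ℝ) (hx : x ∈ Set.Icc (0:ℝ) 1) : |∫ y in x..1, u y| ≤ ν := by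
  have := intervalIntegral.integral_add_adjacent_intervals (bdd_ii hm hK 0 x) (bdd_ii hm hK x 1)
  have h1 : ∫ y in x..1, u y = - ∫ y in (0:ℝ)..x, u y := by linarith
  rw [h1, abs_neg]; exact hν x hx

lemma left_le (w : WP s t e b c θ) (hm : Measurable u) (hK : ∀ x, |u x| ≤ K) {ν : ℝ}
    (hν : ∀ x ∈ Set.Icc (0:ℝ) 1, |∫ y in (0:ℝ)..x, u y| ≤ ν) (h0 : ∫ y in (0:ℝ)..1, u y = 0)
    (x : ℝ) (hx0 : 0 ≤ x) (hx : x ≤ 1/2) : |∫ y in (0:ℝ)..x, u (Wm s t e b c y)| ≤ θ * ν := by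
  have hν0 : 0 ≤ ν := (abs_nonneg _).trans (hν 0 (by simp))
  have hb0 := w.b0
  have hs0 := w.s0
  have he1 := w.e1
  rcases le_total x b with hxb | hxb
  · rw [prim1 w hx0 hxb, abs_mul, abs_of_pos hb0]
    have h1 : b⁻¹ * x ≤ 1 := by rw [inv_mul_le_iff₀ hb0]; linarith
    have h2 : 0 ≤ b⁻¹ * x := by positivity
    exact mul_le_mul w.bθ (tail_le hm hK hν h0 _ ⟨by linarith, by linarith⟩) (abs_nonneg _) (hb0.le.trans w.bθ)
  · have hi := bdd_ii (hm.comp (Wm_meas s t e b c)) (fun x => hK _)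
    have h1 := intervalIntegral.integral_add_adjacent_intervals (hi 0 b) (hi b x)
    simp only [Function.comp] at h1
    have h2 := prim1 (u := u) w hb0.le le_rfl
    rw [inv_mul_cancel₀ hb0.ne', sub_self, h0, mul_zero] at h2
    rw [← h1, h2, zero_add, prim2 w hxb hx, abs_mul, abs_of_pos (by positivity)]
    have := w.hb
    have h3 : s * b ≤ s * x := by gcongr
    have h4 : s * x ≤ s * (1/2) := by gcongr
    exact mul_le_mul w.sθ (hν _ ⟨by linarith, by linarith⟩) (abs_nonneg _) (hb0.le.trans w.bθ)

lemma right_le (w : WP s t e b c θ) (hm : Measurable u) (hK : ∀ x, |u x| ≤ K) {ν : ℝ}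
    (hν : ∀ x ∈ Set.Icc (0:ℝ) 1, |∫ y in (0:ℝ)..x, u y| ≤ ν) (h0 : ∫ y in (0:ℝ)..1, u y = 0)
    (x : ℝ) (hx0 : 1/2 ≤ x) (hx : x ≤ 1) : |∫ y in x..1, u (Wm s t e b c y)| ≤ θ * ν := by
  have hν0 : 0 ≤ ν := (abs_nonneg _).trans (hν 0 (by simp))
  have hc0 := w.c0
  have hs0 := w.t0
  have he1 := w.e1
  rcases le_total (1-c) x with hxb | hxb
  · rw [prim4 w hxb hx, abs_mul, abs_of_pos hc0]
    have h1 : c⁻¹ * (1 - x) ≤ 1 := by rw [inv_mul_le_iff₀ hc0]; linarith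
    have h2 : 0 ≤ c⁻¹ * (1 - x) := mul_nonneg (by positivity) (by linarith)
    exact mul_le_mul w.cθ (tail_le hm hK hν h0 _ ⟨by linarith, by linarith⟩) (abs_nonneg _) (hc0.le.trans w.cθ)
  · have hi := bdd_ii (hm.comp (Wm_meas s t e b c)) (fun x => hK _)
    have h1 := intervalIntegral.integral_add_adjacent_intervals (hi x (1-c)) (hi (1-c) 1)
    simp only [Function.comp] at h1
    have h2 := prim4 (u := u) w le_rfl (by linarith)
    rw [show c⁻¹ * (1-c) + (1 - c⁻¹) = 0 by field_simp; ring, h0, mul_zero] at h2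
    rw [← h1, h2, add_zero, prim3 w hx0 hxb, abs_mul, abs_of_pos (by positivity)]
    have := w.hc
    have h3 : t * x ≤ t * (1 - c) := by gcongr
    have h4 : t * (1/2) ≤ t * x := by gcongr
    exact mul_le_mul w.tθ (hν _ ⟨by linarith, by linarith⟩) (abs_nonneg _) (hc0.le.trans w.cθ)

end prim


structure Good (μ : Measure ℝ) (s t e b c M : ℝ) : Prop where
  prob : IsProbabilityMeasure μ
  inv : ∀ u : ℝ → ℝ, Measurable u → ∫ x, u (Wm s t e b c x) ∂μ = ∫ x, u x ∂μ
  ico : ∀ x y : ℝ, x ≤ y → μ.real (Set.Ico x y) ≤ M * (y - x)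
  small : ∀ ε : ℝ, 0 < ε → ∃ δ > 0, ∀ u : ℝ → ℝ, Measurable u → (∀ x, |u x| ≤ 1) →
      (∀ x ∈ Set.Icc (0:ℝ) 1, |∫ y in (0:ℝ)..x, u y| ≤ δ) → |∫ y, u y ∂μ| ≤ ε

section main
variable {s t e b c θ M : ℝ} {μ : Measure ℝ}

lemma WP.θ0 (w : WP s t e b c θ) : 0 < θ := w.b0.trans_le w.bθ

lemma int_le (g : Good μ s t e b c M) {u : ℝ → ℝ} {K : ℝ} (hK : ∀ x, |u x| ≤ K) :
    |∫ x, u x ∂μ| ≤ K := by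
  have := g.prob
  have := norm_integral_le_of_norm_le_const (μ := μ) (f := u) (Eventually.of_forall hK)
  simpa using this

lemma step1 (w : WP s t e b c θ) (g : Good μ s t e b c M) {u : ℝ → ℝ} {τ : ℝ} (hτ : 0 < τ)
    (hτ' : 2 * (θ * τ) ≤ 1/2) (hm : Measurable u) (hK : ∀ x, |u x| ≤ 1)
    (hν : ∀ x ∈ Set.Icc (0:ℝ) 1, |∫ y in (0:ℝ)..x, u y| ≤ τ) (h0 : ∫ y in (0:ℝ)..1, u y = 0) :
    ∃ u1 : ℝ → ℝ, Measurable u1 ∧ (∀ x, |u1 x| ≤ 1) ∧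
      (∀ x ∈ Set.Icc (0:ℝ) 1, |∫ y in (0:ℝ)..x, u1 y| ≤ θ * τ) ∧ (∫ y in (0:ℝ)..1, u1 y = 0) ∧
      |∫ x, u x ∂μ| ≤ |∫ x, u1 x ∂μ| + 4 * M * (θ * τ) := by
  have hprob := g.prob
  have hρ : 0 < θ * τ := mul_pos w.θ0 hτ
  have hL := left_le w hm hK hν h0
  have hR := right_le w hm hK hν h0
  obtain ⟨ρ, hρe⟩ : ∃ ρ, ρ = θ * τ := ⟨_, rfl⟩
  rw [← hρe] at hρ hτ' ⊢
  simp only [← hρe] at hL hR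
  obtain ⟨v, hv⟩ : ∃ v : ℝ → ℝ, v = fun y => u (Wm s t e b c y) := ⟨_, rfl⟩
  have hvm : Measurable v := hv ▸ hm.comp (Wm_meas s t e b c)
  have hvK : ∀ x, |v x| ≤ 1 := fun x => hv ▸ hK _
  have hinv : ∫ x, v x ∂μ = ∫ x, u x ∂μ := hv ▸ g.inv u hm
  replace hL : ∀ x : ℝ, 0 ≤ x → x ≤ 1/2 → |∫ y in (0:ℝ)..x, v y| ≤ ρ := hv ▸ hL
  replace hR : ∀ x : ℝ, 1/2 ≤ x → x ≤ 1 → |∫ y in x..1, v y| ≤ ρ := hv ▸ hR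
  clear hv
  set x0 : ℝ := 1/2 - 2 * ρ with hx0
  set P := ∫ y in (0:ℝ)..x0, v y with hP
  set Q := ∫ y in (1/2:ℝ)..1, v y with hQ
  have hP1 : |P| ≤ ρ := hL x0 (by linarith) (by linarith)
  have hQ1 : |Q| ≤ ρ := hR _ le_rfl (by norm_num)
  set k : ℝ := (-Q - P) / (2 * ρ) with hk
  have hk2 : k * (2 * ρ) = -Q - P := by rw [hk]; field_simp
  have hk1 : |k| ≤ 1 := by
    rw [hk, abs_div, abs_of_pos (by linarith : 0 < 2 * ρ), div_le_one (by linarith)]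
    rw [abs_le] at *; constructor <;> linarith
  set S := Set.Ico x0 (1/2:ℝ) with hS
  classical
  let u1 : ℝ → ℝ := fun x => if x ∈ S then k else v x
  have hu1m : Measurable u1 := Measurable.ite measurableSet_Ico measurable_const hvm
  have hu1K : ∀ x, |u1 x| ≤ 1 := by
    intro x; simp only [u1]; split_ifs; exacts [hk1, hvK x]
  have hi := bdd_ii hu1m hu1K
  have e1 : ∀ x, 0 ≤ x → x ≤ x0 → ∫ y in (0:ℝ)..x, u1 y = ∫ y in (0:ℝ)..x, v y := by
    intro x h1 h2
    refine ii_congr h1 fun z hz hz' => ?_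
    have : z ∉ S := fun h => by linarith [h.1]
    simp [u1, this]
  have e2 : ∀ x, x0 ≤ x → x ≤ 1/2 → ∫ y in (0:ℝ)..x, u1 y = P + k * (x - x0) := by
    intro x h1 h2
    rw [← intervalIntegral.integral_add_adjacent_intervals (hi 0 x0) (hi x0 x),
      e1 x0 (by linarith) le_rfl, ii_congr (g := fun _ => k) h1 (fun z hz hz' => by
        have : z ∈ S := ⟨hz, by linarith⟩
        simp [u1, this])]
    simp; ring
  have e3 : ∀ x, 1/2 ≤ x → x ≤ 1 → ∫ y in (0:ℝ)..x, u1 y = - ∫ y in x..1, v y := by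
    intro x h1 h2
    rw [← intervalIntegral.integral_add_adjacent_intervals (hi 0 (1/2)) (hi (1/2) x),
      e2 (1/2) (by linarith) le_rfl, ii_congr (g := v) h1 (fun z hz hz' => by
        have : z ∉ S := fun h => by linarith [h.2]
        simp [u1, this])]
    have := intervalIntegral.integral_add_adjacent_intervals (bdd_ii hvm hvK (1/2) x) (bdd_ii hvm hvK x 1)
    have h3 : k * (1/2 - x0) = -Q - P := by rw [← hk2, hx0]; ring
    rw [h3]; linarith
  refine ⟨u1, hu1m, hu1K, ?_, ?_, ?_⟩
  · rintro x ⟨hxa, hxb⟩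
    rcases le_total x x0 with h | h
    · rw [e1 x hxa h]; exact hL x hxa (by linarith)
    rcases le_total x (1/2) with h' | h'
    · rw [e2 x h h']
      have : ∃ l : ℝ, 0 ≤ l ∧ l ≤ 1 ∧ x - x0 = l * (2 * ρ) :=
        ⟨(x - x0) / (2*ρ), div_nonneg (by linarith) (by linarith),
          (div_le_one (by linarith)).2 (by linarith), by field_simp⟩
      obtain ⟨l, hl0, hl1, hl⟩ := this
      have : P + k * (x - x0) = (1 - l) * P + l * (-Q) := by
        rw [hl]; linear_combination l * hk2
      rw [this]
      rw [abs_le] at *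
      constructor <;> nlinarith
    · rw [e3 x h' hxb, abs_neg]; exact hR x h' hxb
  · rw [e3 1 (by norm_num) le_rfl]; simp
  · have hd : |∫ x, v x ∂μ - ∫ x, u1 x ∂μ| ≤ 4 * M * ρ := by
      rw [← integral_sub (bdd_int hvm hvK) (bdd_int hu1m hu1K)]
      have h1 : ∫ x, (v x - u1 x) ∂μ = ∫ x in S, (v x - u1 x) ∂μ := by
        rw [← integral_indicator (measurableSet_Ico : MeasurableSet S)]
        congr 1; ext x
        by_cases hx : x ∈ S
        · rw [Set.indicator_of_mem hx]
        · rw [Set.indicator_of_notMem hx]; simp only [u1, hx, if_false, sub_self]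
      rw [h1]
      have h2 := norm_setIntegral_le_of_norm_le_const (μ := μ) (s := S) (f := fun x => v x - u1 x) (C := 2)
        (measure_lt_top _ _) (fun x _ => by
          have a1 := hvK x; have a2 := hu1K x
          rw [Real.norm_eq_abs]; rw [abs_le] at *; constructor <;> linarith)
      rw [Real.norm_eq_abs] at h2
      have h3 := g.ico x0 (1/2) (by linarith)
      have h4 : M * (1/2 - x0) = 2 * M * ρ := by rw [hx0]; ring
      linarith
    have := abs_sub_abs_le_abs_sub (∫ x, v x ∂μ) (∫ x, u1 x ∂μ)
    rw [← hinv]; linarith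

lemma bv_aux (w : WP s t e b c θ) (hM : 0 < M) (g : Good μ s t e b c M) (C : ℝ)
    (hC : C = (4 + 4 * M) / (1 - θ)) {ε δ : ℝ} (hε : 0 < ε)
    (hδ : ∀ u : ℝ → ℝ, Measurable u → (∀ x, |u x| ≤ 1) →
      (∀ x ∈ Set.Icc (0:ℝ) 1, |∫ y in (0:ℝ)..x, u y| ≤ δ) → |∫ y, u y ∂μ| ≤ ε) (n : ℕ) :
    ∀ (u : ℝ → ℝ) (τ : ℝ), 0 < τ → Measurable u → (∀ x, |u x| ≤ 1) →
    (∀ x ∈ Set.Icc (0:ℝ) 1, |∫ y in (0:ℝ)..x, u y| ≤ τ) → (∫ y in (0:ℝ)..1, u y = 0) →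
    θ ^ n * τ ≤ δ → |∫ x, u x ∂μ| ≤ C * τ + ε := by
  have hθ := w.θ0
  have hθ1 := w.θ1
  have hC1 : C * (1 - θ) = 4 + 4 * M := by rw [hC]; field_simp [show 1 - θ ≠ 0 by linarith]
  have hC4 : 4 ≤ C := by nlinarith
  induction n with
  | zero =>
    intro u τ hτ hm hK hν h0 hn
    have := hδ u hm hK (fun x hx => (hν x hx).trans (by simpa using hn))
    nlinarith
  | succ n ih =>
    intro u τ hτ hm hK hν h0 hn
    have hρ : 0 < θ * τ := mul_pos hθ hτ
    rcases le_total (2 * (θ * τ)) (1/2) with h | h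
    · obtain ⟨u1, a1, a2, a3, a4, a5⟩ := step1 w g hτ h hm hK hν h0
      have := ih u1 (θ * τ) hρ a1 a2 a3 a4 (by rw [← mul_assoc, ← pow_succ]; exact hn)
      have h5 : C * τ - C * (θ * τ) = (4 + 4 * M) * τ := by rw [← hC1]; ring
      have h6 : M * (θ * τ) ≤ M * τ := by
        apply mul_le_mul_of_nonneg_left _ hM.le; nlinarith
      nlinarith
    · have := int_le g hK
      nlinarith

lemma bv (w : WP s t e b c θ) (hM : 0 < M) (g : Good μ s t e b c M) (C : ℝ)
    (hC : C = (4 + 4 * M) / (1 - θ)) {u : ℝ → ℝ} {K τ : ℝ} (hK0 : 0 < K) (hτ : 0 < τ)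
    (hm : Measurable u) (hK : ∀ x, |u x| ≤ K)
    (hν : ∀ x ∈ Set.Icc (0:ℝ) 1, |∫ y in (0:ℝ)..x, u y| ≤ τ) (h0 : ∫ y in (0:ℝ)..1, u y = 0) :
    |∫ x, u x ∂μ| ≤ C * τ := by
  have key : |∫ x, K⁻¹ * u x ∂μ| ≤ C * (K⁻¹ * τ) := by
    refine le_of_forall_pos_le_add fun ε hε => ?_
    obtain ⟨δ, hδ0, hδ⟩ := g.small ε hε
    have hlim : Tendsto (fun n : ℕ => θ ^ n * (K⁻¹ * τ)) atTop (𝓝 0) := by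
      simpa using (tendsto_pow_atTop_nhds_zero_of_lt_one w.θ0.le w.θ1).mul_const (K⁻¹ * τ)
    obtain ⟨n, hn⟩ := (hlim.eventually (gt_mem_nhds hδ0)).exists
    refine bv_aux w hM g C hC hε hδ n (fun x => K⁻¹ * u x) (K⁻¹ * τ) (by positivity) (hm.const_mul _) ?_ ?_ ?_ hn.le
    · intro x; rw [abs_mul, abs_of_pos (by positivity), inv_mul_le_iff₀ hK0]; simpa using hK x
    · intro x hx
      rw [intervalIntegral.integral_const_mul, abs_mul, abs_of_pos (by positivity)]
      exact mul_le_mul_of_nonneg_left (hν x hx) (by positivity)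
    · rw [intervalIntegral.integral_const_mul, h0, mul_zero]
  rw [integral_const_mul, abs_mul, abs_of_pos (by positivity)] at key
  have h1 : C * (K⁻¹ * τ) = K⁻¹ * (C * τ) := by ring
  rw [h1] at key
  exact le_of_mul_le_mul_left key (by positivity)

/-- remove half means -/
noncomputable def hv (A B x : ℝ) : ℝ := if x < 1/2 then A else B

lemma hv_meas (A B : ℝ) : Measurable (hv A B) :=
  Measurable.ite measurableSet_Iio measurable_const measurable_const

lemma hv_le {A B K : ℝ} (hA : |A| ≤ K) (hB : |B| ≤ K) (x : ℝ) : |hv A B x| ≤ K := by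
  unfold hv; split_ifs <;> assumption

lemma hv_int (A B : ℝ) [IsProbabilityMeasure μ] :
    ∫ x, hv A B x ∂μ = A * (1 - μ.real (Set.Ici (1/2))) + B * μ.real (Set.Ici (1/2)) := by
  have : hv A B = fun x => A + (Set.Ici (1/2:ℝ)).indicator (fun _ => B - A) x := by
    ext x; by_cases h : x < 1/2
    · have : x ∉ Set.Ici (1/2:ℝ) := by simpa using h
      rw [Set.indicator_of_notMem this]; simp only [hv, h, if_true]; ring
    · have : x ∈ Set.Ici (1/2:ℝ) := by simpa using h
      rw [Set.indicator_of_mem this]; simp only [hv, h, if_false]; ring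
  rw [this, integral_add (integrable_const _) ((integrable_const _).indicator measurableSet_Ici),
    integral_indicator measurableSet_Ici]
  simp; ring

lemma hv_left (A B x : ℝ) (h0 : 0 ≤ x) (hx : x ≤ 1/2) : ∫ y in (0:ℝ)..x, hv A B y = A * x := by
  rw [ii_congr (g := fun _ => A) h0 (fun z hz hz' => by
    have : z < 1/2 := by linarith
    simp only [hv, this, if_true])]
  simp; ring

lemma hv_right (A B x y : ℝ) (h0 : 1/2 ≤ x) (hx : x ≤ y) : ∫ y in x..y, hv A B y = B * (y - x) := by
  rw [ii_congr (g := fun _ => B) hx (fun z hz hz' => by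
    have : ¬ z < 1/2 := by linarith
    simp only [hv, this, if_false])]
  simp; ring

lemma centered {v : ℝ → ℝ} {K ρ A B : ℝ} (hm : Measurable v) (hK : ∀ x, |v x| ≤ K)
    (hA : A = ∫ y in (0:ℝ)..(1/2), v y) (hB : B = ∫ y in (1/2:ℝ)..1, v y)
    (hL : ∀ x : ℝ, 0 ≤ x → x ≤ 1/2 → |∫ y in (0:ℝ)..x, v y| ≤ ρ)
    (hR : ∀ x : ℝ, 1/2 ≤ x → x ≤ 1 → |∫ y in x..1, v y| ≤ ρ) :
    (∀ x ∈ Set.Icc (0:ℝ) 1, |∫ y in (0:ℝ)..x, (v y - hv (2*A) (2*B) y)| ≤ ρ + max |A| |B|) ∧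
    (∫ y in (0:ℝ)..(1/2), (v y - hv (2*A) (2*B) y) = 0) ∧
    (∫ y in (0:ℝ)..1, (v y - hv (2*A) (2*B) y) = 0) := by
  have hi := bdd_ii hm hK
  have hi2 := bdd_ii (hv_meas (2*A) (2*B)) (hv_le (le_max_left _ _) (le_max_right _ _))
  have e1 : ∀ x, 0 ≤ x → x ≤ 1/2 → ∫ y in (0:ℝ)..x, (v y - hv (2*A) (2*B) y) =
      (∫ y in (0:ℝ)..x, v y) - 2*A*x := by
    intro x h1 h2
    rw [intervalIntegral.integral_sub (hi _ _) (hi2 _ _), hv_left _ _ x h1 h2]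
  have e0 : ∫ y in (0:ℝ)..(1/2), (v y - hv (2*A) (2*B) y) = 0 := by
    rw [e1 _ (by norm_num) le_rfl, ← hA]; ring
  have e2 : ∀ x, 1/2 ≤ x → x ≤ 1 → ∫ y in (0:ℝ)..x, (v y - hv (2*A) (2*B) y) =
      2*B*(1-x) - (∫ y in x..1, v y) := by
    intro x h1 h2
    have h3 := intervalIntegral.integral_add_adjacent_intervals ((hi 0 (1/2)).sub (hi2 _ _)) ((hi (1/2) x).sub (hi2 _ _))
    rw [← h3, e0, intervalIntegral.integral_sub (hi _ _) (hi2 _ _), hv_right _ _ _ x le_rfl h1]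
    have := intervalIntegral.integral_add_adjacent_intervals (hi (1/2) x) (hi x 1)
    linarith
  refine ⟨?_, e0, ?_⟩
  · rintro x ⟨ha, hb⟩
    rcases le_total x (1/2) with h | h
    · rw [e1 x ha h]
      have h1 := hL x ha h
      have h2 : |2*A*x| ≤ |A| := by
        rw [abs_mul, abs_mul, abs_of_nonneg ha, abs_two]; nlinarith [abs_nonneg A]
      have := le_max_left |A| |B|
      have := abs_sub (∫ y in (0:ℝ)..x, v y) (2*A*x)
      linarith
    · rw [e2 x h hb]
      have h1 := hR x h hb
      have h2 : |2*B*(1-x)| ≤ |B| := by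
        rw [abs_mul, abs_mul, abs_of_nonneg (by linarith : 0 ≤ 1 - x), abs_two]; nlinarith [abs_nonneg B]
      have := le_max_right |A| |B|
      have := abs_sub (2*B*(1-x)) (∫ y in x..1, v y)
      linarith
  · rw [e2 1 (by norm_num) le_rfl]; simp

noncomputable def DD (C : ℝ) : ℕ → ℝ
  | 0 => 0
  | n+1 => 2 + C + 3 * DD C n

lemma DD0 {C : ℝ} (hC : 0 ≤ C) (n : ℕ) : 0 ≤ DD C n := by
  induction n with
  | zero => simp [DD]
  | succ n ih => simp only [DD]; linarith

lemma decay (w : WP s t e b c θ) (hM : 0 < M) (g : Good μ s t e b c M) (C : ℝ)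
    (hC : C = (4 + 4 * M) / (1 - θ)) (n : ℕ) : ∀ (u : ℝ → ℝ) (K τ : ℝ), 0 < K → 0 < τ →
    Measurable u → (∀ x, |u x| ≤ K) →
    (∀ x ∈ Set.Icc (0:ℝ) 1, |∫ y in (0:ℝ)..x, u y| ≤ τ) → (∫ y in (0:ℝ)..(1/2), u y = 0) →
    (∫ y in (0:ℝ)..1, u y = 0) →
    |∫ x, u x ∂μ| ≤ C * θ ^ n * τ + DD C n * e * K := by
  have hC0 : 0 ≤ C := by rw [hC]; exact div_nonneg (by linarith) (by linarith [w.θ1])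
  have hprob := g.prob
  have he0 := w.e0
  have he1 := w.e1
  induction n with
  | zero =>
    intro u K τ hK0 hτ hm hK hν _ h0
    have := bv w hM g C hC hK0 hτ hm hK hν h0
    simpa [DD] using this
  | succ n ih =>
    intro u K τ hK0 hτ hm hK hν hh h0
    obtain ⟨v, hve⟩ : ∃ v : ℝ → ℝ, v = fun y => u (Wm s t e b c y) := ⟨_, rfl⟩
    have hvm : Measurable v := hve ▸ hm.comp (Wm_meas s t e b c)
    have hvK : ∀ x, |v x| ≤ K := fun x => hve ▸ hK _
    have hinv : ∫ x, v x ∂μ = ∫ x, u x ∂μ := hve ▸ g.inv u hm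
    have hL : ∀ x : ℝ, 0 ≤ x → x ≤ 1/2 → |∫ y in (0:ℝ)..x, v y| ≤ θ * τ := hve ▸ left_le w hm hK hν h0
    have hR : ∀ x : ℝ, 1/2 ≤ x → x ≤ 1 → |∫ y in x..1, v y| ≤ θ * τ := hve ▸ right_le w hm hK hν h0
    obtain ⟨A, hA⟩ : ∃ A, A = ∫ y in (0:ℝ)..(1/2), v y := ⟨_, rfl⟩
    obtain ⟨B, hB⟩ : ∃ B, B = ∫ y in (1/2:ℝ)..1, v y := ⟨_, rfl⟩
    have hst : |∫ y in (0:ℝ)..(1/2+e), u y| ≤ K * e := by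
      rw [← intervalIntegral.integral_add_adjacent_intervals (bdd_ii hm hK 0 (1/2)) (bdd_ii hm hK _ _), hh, zero_add]
      have := intervalIntegral.norm_integral_le_of_norm_le_const (a := 1/2) (b := 1/2 + e) (f := u) (C := K) (fun x _ => hK x)
      rw [Real.norm_eq_abs] at this
      rwa [show (1/2 + e - 1/2 : ℝ) = e by ring, abs_of_nonneg he0] at this
    have hA1 : |A| ≤ K * e := by
      rw [hA, hve, half_left w hm hK, h0, mul_zero, zero_add, abs_mul, abs_of_pos (inv_pos.2 (by linarith [w.s0]))]
      exact (mul_le_of_le_one_left (abs_nonneg _) (inv_le_one_of_one_le₀ w.s0.le)).trans hst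
    have hB1 : |B| ≤ K * e := by
      rw [hB, hve, half_right w hm hK, h0, mul_zero, zero_add, abs_mul, abs_of_pos (inv_pos.2 (by linarith [w.t0]))]
      exact (mul_le_of_le_one_left (abs_nonneg _) (inv_le_one_of_one_le₀ w.t0.le)).trans hst
    obtain ⟨c1, c2, c3⟩ := centered hvm hvK hA hB hL hR
    have hmax : max |A| |B| ≤ K * e := max_le hA1 hB1
    have hvl : ∀ x, |hv (2*A) (2*B) x| ≤ 2 * (K * e) :=
      hv_le (by rw [abs_mul, abs_two]; linarith) (by rw [abs_mul, abs_two]; linarith)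
    have hKe : 0 ≤ K * e := by positivity
    have hKe2 : 2 * (K * e) ≤ K := by nlinarith
    have := ih (fun x => v x - hv (2*A) (2*B) x) (3 * K) (θ * τ + K * e) (by positivity)
      (by have := mul_pos w.θ0 hτ; linarith) (hvm.sub (hv_meas _ _)) (fun x => by
        have h1 := hvK x; have h2 := hvl x
        have := abs_sub (v x) (hv (2*A) (2*B) x)
        linarith) (fun x hx => (c1 x hx).trans (by linarith)) c2 c3
    rw [integral_sub (bdd_int hvm hvK) (bdd_int (hv_meas _ _) hvl), hinv] at this
    have h5 := int_le g hvl
    have h6 := abs_sub_abs_le_abs_sub (∫ x, u x ∂μ) (∫ x, hv (2*A) (2*B) x ∂μ)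
    have h7 : θ ^ n ≤ 1 := pow_le_one₀ w.θ0.le w.θ1.le
    have h8 : C * θ ^ n * (K * e) ≤ C * (K * e) := by
      apply mul_le_mul_of_nonneg_right _ hKe
      exact mul_le_of_le_one_right hC0 h7
    have h9 : C * θ ^ (n+1) * τ + DD C (n+1) * e * K = C * θ ^ n * (θ * τ) + (2 + C + 3 * DD C n) * e * K := by
      simp only [DD]; ring
    rw [h9]
    linarith

/-- centered functions bounded by 1 -/
lemma decay' (w : WP s t e b c θ) (hM : 0 < M) (g : Good μ s t e b c M) (C : ℝ)
    (hC : C = (4 + 4 * M) / (1 - θ)) (n : ℕ) (v : ℝ → ℝ) (hm : Measurable v) (hK : ∀ x, |v x| ≤ 1)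
    (A B : ℝ) (hA : A = ∫ y in (0:ℝ)..(1/2), v y) (hB : B = ∫ y in (1/2:ℝ)..1, v y) :
    |∫ x, v x ∂μ - (2 * A * (1 - μ.real (Set.Ici (1/2))) + 2 * B * μ.real (Set.Ici (1/2)))| ≤
      2 * (C * θ ^ n + DD C n * e) := by
  have hprob := g.prob
  have hint : ∀ x y : ℝ, x ≤ y → |∫ z in x..y, v z| ≤ y - x := by
    intro x y h
    have := intervalIntegral.norm_integral_le_of_norm_le_const (a := x) (b := y) (f := v) (C := 1) (fun x _ => hK x)
    rwa [one_mul, abs_of_nonneg (by linarith)] at this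
  have hA1 : |A| ≤ 1/2 := by rw [hA]; have := hint 0 (1/2) (by norm_num); linarith
  have hB1 : |B| ≤ 1/2 := by rw [hB]; have := hint (1/2) 1 (by norm_num); linarith
  obtain ⟨c1, c2, c3⟩ := centered (ρ := 1/2) hm hK hA hB
    (fun x h1 h2 => (hint 0 x h1).trans (by linarith)) (fun x h1 h2 => (hint x 1 h2).trans (by linarith))
  have hvl : ∀ x, |hv (2*A) (2*B) x| ≤ 1 :=
    hv_le (by rw [abs_mul, abs_two]; linarith) (by rw [abs_mul, abs_two]; linarith)
  have := decay w hM g C hC n _ 2 2 two_pos two_pos (hm.sub (hv_meas (2*A) (2*B)))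
    (fun x => by
        have h1 := hK x; have h2 := hvl x
        have := abs_sub (v x) (hv (2*A) (2*B) x)
        simp only [Pi.sub_apply]
        linarith)
    (fun x hx => (c1 x hx).trans (by linarith [max_le hA1 hB1])) c2 c3
  simp only [Pi.sub_apply] at this
  rw [integral_sub (bdd_int hm hK) (bdd_int (hv_meas _ _) hvl), hv_int] at this
  linarith

lemma massR (w : WP s t e b c θ) (hM : 0 < M) (g : Good μ s t e b c M) (C : ℝ)
    (hC : C = (4 + 4 * M) / (1 - θ)) (n : ℕ) :
    |μ.real (Set.Ici (1/2)) - ((b + 2 * s⁻¹ * e) * (1 - μ.real (Set.Ici (1/2))) + (c + 2 * t⁻¹ * e) * μ.real (Set.Ici (1/2)))| ≤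
      2 * (C * θ ^ n + DD C n * e) := by
  have hprob := g.prob
  have hx1 : ∀ x, |hv 0 1 x| ≤ 1 := hv_le (by simp) (by simp)
  have hi := bdd_ii (hv_meas 0 1) hx1
  have h1 : ∀ x, 1/2 ≤ x → ∫ y in (0:ℝ)..x, hv 0 1 y = x - 1/2 := by
    intro x hx
    rw [← intervalIntegral.integral_add_adjacent_intervals (hi 0 (1/2)) (hi _ _), hv_left _ _ _ (by norm_num) le_rfl,
      hv_right _ _ _ _ le_rfl hx]; ring
  have h2 := half_left w (hv_meas 0 1) hx1
  have h3 := half_right w (hv_meas 0 1) hx1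
  rw [h1 1 (by norm_num), h1 (1/2+e) (by linarith [w.e0])] at h2 h3
  have := decay' w hM g C hC n (fun y => hv 0 1 (Wm s t e b c y)) ((hv_meas 0 1).comp (Wm_meas _ _ _ _ _))
    (fun x => hx1 _) _ _ h2.symm h3.symm
  rw [g.inv _ (hv_meas 0 1), hv_int] at this
  convert this using 2
  ring

end main


lemma wd_int {G : ℝ → ℝ} (hG : Measurable G) (hG0 : ∀ x, 0 ≤ G x) (u : ℝ → ℝ) :
    ∫ x, u x ∂(lam.withDensity fun x => ENNReal.ofReal (G x)) = ∫ x, G x * u x ∂lam := by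
  rw [integral_withDensity_eq_integral_toReal_smul (by fun_prop) (by simp)]
  simp [hG0]

lemma lam_ii (f : ℝ → ℝ) : ∫ x, f x ∂lam = ∫ x in (0:ℝ)..1, f x := by
  rw [intervalIntegral.integral_of_le zero_le_one, integral_Icc_eq_integral_Ioc]

lemma final_a {s t e b c θ M C HL HR : ℝ} {μ : Measure ℝ} (w : WP s t e b c θ) (hM : 0 < M)
    (g : Good μ s t e b c M) (hC : C = (4 + 4 * M) / (1 - θ)) (n : ℕ) (hH : HL + HR = 2)
    {G : ℝ → ℝ} (hG : Measurable G) (hG0 : ∀ x, 0 ≤ G x) (hGi : Integrable G lam)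
    (hμ : μ = lam.withDensity fun x => ENNReal.ofReal (G x)) :
    ∫ x, |G x - hv HL HR x| ∂lam ≤ 2 * (C * θ ^ n + DD C n * e) +
      2 * |μ.real (Set.Ici (1/2)) - HR/2| := by
  classical
  let σ : ℝ → ℝ := fun x => if G x < hv HL HR x then -1 else 1
  have hσm : Measurable σ := Measurable.ite (measurableSet_lt hG (hv_meas _ _)) measurable_const measurable_const
  have hσ1 : ∀ x, |σ x| ≤ 1 := by intro x; simp only [σ]; split_ifs <;> simp
  have hhv : ∀ x, |hv HL HR x| ≤ max |HL| |HR| := hv_le (le_max_left _ _) (le_max_right _ _)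
  have h1 : ∀ x, |G x - hv HL HR x| = G x * σ x - hv HL HR x * σ x := by
    intro x; simp only [σ]; split_ifs with h
    · rw [abs_of_neg (by linarith)]; ring
    · rw [abs_of_nonneg (by linarith)]; ring
  have hd := decay' w hM g C hC n σ hσm hσ1 _ _ rfl rfl
  have hprob := g.prob
  set A := ∫ y in (0:ℝ)..(1/2), σ y with hA
  set B := ∫ y in (1/2:ℝ)..1, σ y with hB
  have hint : ∀ x y : ℝ, x ≤ y → |∫ z in x..y, σ z| ≤ y - x := by
    intro x y h
    have := intervalIntegral.norm_integral_le_of_norm_le_const (a := x) (b := y) (f := σ) (C := 1) (fun x _ => hσ1 x)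
    rwa [one_mul, abs_of_nonneg (by linarith)] at this
  have hA1 : |A| ≤ 1/2 := by rw [hA]; have := hint 0 (1/2) (by norm_num); linarith
  have hB1 : |B| ≤ 1/2 := by rw [hB]; have := hint (1/2) 1 (by norm_num); linarith
  have hmm : Measurable fun x => hv HL HR x * σ x := (hv_meas _ _).mul hσm
  have hmb : ∀ x, |hv HL HR x * σ x| ≤ max |HL| |HR| := by
    intro x; rw [abs_mul]
    exact (mul_le_of_le_one_right (abs_nonneg _) (hσ1 x)).trans (hhv x)
  have h2 : ∫ x, hv HL HR x * σ x ∂lam = HL * A + HR * B := by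
    rw [lam_ii, ← intervalIntegral.integral_add_adjacent_intervals (bdd_ii hmm hmb 0 (1/2)) (bdd_ii hmm hmb _ _),
      ii_congr (f := fun x => hv HL HR x * σ x) (g := fun y => HL * σ y) (x := 0) (y := 1/2) (by norm_num) (fun z hz hz' => by simp only [hv, hz', if_true]),
      ii_congr (f := fun x => hv HL HR x * σ x) (g := fun y => HR * σ y) (x := 1/2) (y := 1) (by norm_num) (fun z hz hz' => by
        have : ¬ z < 1/2 := by linarith
        simp only [hv, this, if_false])]
    simp only [intervalIntegral.integral_const_mul, hA, hB]
  have h3 : ∫ x, G x * σ x ∂lam = ∫ x, σ x ∂μ := by rw [hμ, wd_int hG hG0]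
  simp only [h1]
  rw [integral_sub (hGi.mul_bdd (c := 1) hσm.aestronglyMeasurable (Eventually.of_forall hσ1)) (bdd_int hmm hmb), h2, h3]
  set m := μ.real (Set.Ici (1/2)) with hm
  have h4 : (2*B - 2*A) * (m - HR/2) ≤ 2 * |m - HR/2| := by
    refine (le_abs_self _).trans ?_
    rw [abs_mul]
    apply mul_le_mul_of_nonneg_right _ (abs_nonneg _)
    rw [abs_le] at *; constructor <;> linarith
  have h5 := (abs_le.1 hd).2
  have h6 : HL = 2 - HR := by linarith
  rw [h6]
  nlinarith

lemma reduce {h k0 : ℝ → ℝ} (hk0 : Measurable k0) (h0 : ∀ᵐ x ∂lam, 0 ≤ h x) {G : ℝ → ℝ}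
    (hG : Measurable G) (hG0 : ∀ x, 0 ≤ G x) (hGh : ∀ᵐ x ∂lam, G x ≤ h x)
    (hfin : ∫⁻ x, ENNReal.ofReal (G x) ∂lam ≠ ⊤)
    (heq : ∫⁻ x, ENNReal.ofReal (h x) ∂lam = ∫⁻ x, ENNReal.ofReal (G x) ∂lam) :
    ∫ x, |h x - k0 x| ∂lam ≤ ∫ x, |G x - k0 x| ∂lam := by
  classical
  by_cases hk : AEStronglyMeasurable (fun x => |h x - k0 x|) lam
  · let k := hk.mk
    have hkm : Measurable k := hk.stronglyMeasurable_mk.measurable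
    have hke : ∀ᵐ x ∂lam, |h x - k0 x| = k x := hk.ae_eq_mk
    let G2 : ℝ → ℝ := fun x => if k0 x - k x < G x then k0 x + k x else k0 x - k x
    have hG2 : Measurable G2 := Measurable.ite (measurableSet_lt (hk0.sub hkm) hG) (hk0.add hkm) (hk0.sub hkm)
    have h1 : ∀ᵐ x ∂lam, G2 x ≤ h x ∧ G x ≤ G2 x := by
      filter_upwards [hke, hGh] with x hx hx'
      simp only [G2]
      rcases abs_cases (h x - k0 x) with ⟨h3, h4⟩ | ⟨h3, h4⟩ <;> split_ifs <;> constructor <;> linarith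
    have h2 : (fun x => ENNReal.ofReal (G x)) =ᵐ[lam] fun x => ENNReal.ofReal (G2 x) := by
      refine ae_eq_of_ae_le_of_lintegral_le ?_ hfin (by fun_prop) ?_
      · filter_upwards [h1] with x hx using ENNReal.ofReal_le_ofReal hx.2
      · rw [← heq]
        refine lintegral_mono_ae ?_
        filter_upwards [h1] with x hx using ENNReal.ofReal_le_ofReal hx.1
    refine (integral_congr_ae ?_).le
    filter_upwards [h1, h2, hke] with x hx hx2 hx3
    have h4 : G x = G2 x := by
      have h5 := congrArg ENNReal.toReal hx2
      rwa [ENNReal.toReal_ofReal (hG0 x), ENNReal.toReal_ofReal ((hG0 x).trans hx.2)] at h5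
    have hk0' : 0 ≤ k x := hx3 ▸ abs_nonneg _
    simp only [hx3]
    rw [h4]; simp only [G2]
    split_ifs
    · rw [add_sub_cancel_left, abs_of_nonneg hk0']
    · rw [show k0 x - k x - k0 x = -k x by ring, abs_neg, abs_of_nonneg hk0']
  · rw [integral_non_aestronglyMeasurable hk]
    exact integral_nonneg fun x => abs_nonneg _

lemma Wmap_eq {s₁ s₂ p q r a : ℝ} (hs : 0 < s₁ + p*a) (ht : 0 < s₂ + q*a) :
    Wmap s₁ s₂ p q r a = Wm (s₁ + p*a) (s₂ + q*a) (r*a)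
      ((s₁ + p*a - 1 - 2*(r*a))/(2*(s₁+p*a))) ((s₂ + q*a - 1 - 2*(r*a))/(2*(s₂+q*a))) := by
  ext x
  have h1 : 1/2 - (1/2 + r*a)/(s₁ + p*a) = (s₁ + p*a - 1 - 2*(r*a))/(2*(s₁+p*a)) := by
    have := hs.ne'
    generalize s₁ + p*a = s at *
    field_simp; ring
  have h2 : 1/2 + (1/2 + r*a)/(s₂ + q*a) = 1 - (s₂ + q*a - 1 - 2*(r*a))/(2*(s₂+q*a)) := by
    have := ht.ne'
    generalize s₂ + q*a = s at *
    field_simp; ring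
  have h3 : s₁ - 1 + p*a - 2*r*a = s₁ + p*a - 1 - 2*(r*a) := by ring
  have h4 : s₂ - 1 + q*a - 2*r*a = s₂ + q*a - 1 - 2*(r*a) := by ring
  simp only [Wmap, Wm, h1, h2, h3, h4, inv_div]
  congr 1
  congr 1
  · ring
  congr 1
  · ring
  · ring

lemma good_of {s₁ s₂ p q r a M : ℝ} {μ : Measure ℝ} {h : ℝ → ℝ} (hM : 0 < M)
    (hs : 0 < s₁ + p*a) (ht : 0 < s₂ + q*a) (hp : IsProbabilityMeasure μ)
    (h0 : ∀ᵐ x ∂lam, 0 ≤ h x) (hμ : μ = lam.withDensity fun x => ENNReal.ofReal (h x))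
    (hinv : ∀ A : Set ℝ, MeasurableSet A → μ (Wmap s₁ s₂ p q r a ⁻¹' A) = μ A)
    (hb : ∀ᵐ x ∂lam, h x ≤ M) :
    Good μ (s₁ + p*a) (s₂ + q*a) (r*a)
      ((s₁ + p*a - 1 - 2*(r*a))/(2*(s₁+p*a))) ((s₂ + q*a - 1 - 2*(r*a))/(2*(s₂+q*a))) M ∧
    ∃ G : ℝ → ℝ, Measurable G ∧ (∀ x, 0 ≤ G x) ∧ Integrable G lam ∧
      (μ = lam.withDensity fun x => ENNReal.ofReal (G x)) ∧
      ∀ k0 : ℝ → ℝ, Measurable k0 → ∫ x, |h x - k0 x| ∂lam ≤ ∫ x, |G x - k0 x| ∂lam := by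
  obtain ⟨g, hgm, hgle, hgeq⟩ := exists_measurable_le_withDensity_eq lam (fun x => ENNReal.ofReal (h x))
  have hgtop : ∀ x, g x ≠ ⊤ := fun x => ((hgle x).trans_lt ENNReal.ofReal_lt_top).ne
  obtain ⟨G, hGe⟩ : ∃ G : ℝ → ℝ, G = fun x => (g x).toReal := ⟨_, rfl⟩
  have hGm : Measurable G := hGe ▸ hgm.ennreal_toReal
  have hG0 : ∀ x, 0 ≤ G x := fun x => by simp [hGe]
  have hGg : ∀ x, ENNReal.ofReal (G x) = g x := fun x => by simp [hGe, ENNReal.ofReal_toReal (hgtop x)]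
  have hGh : ∀ᵐ x ∂lam, G x ≤ h x := by
    filter_upwards [h0] with x hx
    have := ENNReal.toReal_mono ENNReal.ofReal_ne_top (hgle x)
    rw [ENNReal.toReal_ofReal hx] at this
    rw [hGe]; exact this
  have hμG : μ = lam.withDensity fun x => ENNReal.ofReal (G x) := by
    rw [hμ, ← hgeq]; congr 1; ext x; rw [hGg]
  have hone : ∀ f : ℝ → ℝ, (μ = lam.withDensity fun x => ENNReal.ofReal (f x)) → ∫⁻ x, ENNReal.ofReal (f x) ∂lam = 1 := by
    intro f hf
    have := measure_univ (μ := μ)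
    rwa [hf, withDensity_apply _ MeasurableSet.univ, Measure.restrict_univ] at this
  have hGi : Integrable G lam := by
    refine Integrable.of_bound hGm.aestronglyMeasurable M ?_
    filter_upwards [hGh, hb] with x h1 h2
    rw [Real.norm_eq_abs, abs_of_nonneg (hG0 x)]; linarith
  refine ⟨⟨hp, ?_, ?_, ?_⟩, G, hGm, hG0, hGi, hμG, ?_⟩
  · intro u hu
    rw [Wmap_eq hs ht] at hinv
    have hW := Wm_meas (s₁ + p*a) (s₂ + q*a) (r*a)
      ((s₁ + p*a - 1 - 2*(r*a))/(2*(s₁+p*a))) ((s₂ + q*a - 1 - 2*(r*a))/(2*(s₂+q*a)))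
    have hmap : μ.map (Wm (s₁ + p*a) (s₂ + q*a) (r*a)
      ((s₁ + p*a - 1 - 2*(r*a))/(2*(s₁+p*a))) ((s₂ + q*a - 1 - 2*(r*a))/(2*(s₂+q*a)))) = μ := by
      ext A hA
      rw [Measure.map_apply hW hA, hinv A hA]
    conv_rhs => rw [← hmap]
    rw [integral_map hW.aemeasurable hu.aestronglyMeasurable]
  · intro x y hxy
    have h1 : μ (Set.Ico x y) ≤ ENNReal.ofReal (M * (y - x)) := by
      rw [hμ, withDensity_apply _ measurableSet_Ico]
      calc ∫⁻ z in Set.Ico x y, ENNReal.ofReal (h z) ∂lam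
          ≤ ∫⁻ z in Set.Ico x y, ENNReal.ofReal M ∂lam := by
            refine lintegral_mono_ae (ae_restrict_of_ae ?_)
            filter_upwards [hb] with z hz using ENNReal.ofReal_le_ofReal hz
        _ = ENNReal.ofReal M * lam (Set.Ico x y) := by rw [setLIntegral_const]
        _ ≤ ENNReal.ofReal M * volume (Set.Ico x y) := by
            exact mul_le_mul_right (Measure.restrict_le_self _) _
        _ = ENNReal.ofReal (M * (y - x)) := by
            rw [Real.volume_Ico, ENNReal.ofReal_mul hM.le]
    exact ENNReal.toReal_le_of_le_ofReal (mul_nonneg hM.le (by linarith)) h1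
  · intro ε hε
    obtain ⟨δ, hδ, H⟩ := weak_eps G hGi ε hε
    refine ⟨δ, hδ, fun u h1 h2 h3 => ?_⟩
    rw [hμG, wd_int hGm hG0]; exact H u h1 h2 h3
  · intro k0 hk0
    refine reduce hk0 h0 hGm hG0 hGh ?_ ?_
    · rw [hone G hμG]; simp
    · rw [hone G hμG, hone h hμ]

lemma mass_final {m β γ b0 c0 η : ℝ} (hm0 : 0 ≤ m) (hm1 : m ≤ 1) (hb0 : 0 < b0) (hc0 : c0 < 1/2)
    (H : |m - (β * (1 - m) + γ * m)| ≤ η) :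
    |m - b0 / (1 + b0 - c0)| ≤ 2 * (η + |β - b0| + |γ - c0|) := by
  have hκ : 1/2 < 1 + b0 - c0 := by linarith
  have h1 : (m - b0 / (1 + b0 - c0)) * (1 + b0 - c0) =
      (m - (β * (1 - m) + γ * m)) + (β - b0) * (1 - m) + (γ - c0) * m := by
    have : b0 / (1 + b0 - c0) * (1 + b0 - c0) = b0 := by field_simp
    rw [sub_mul, this]; ring
  have h2 : |m - b0 / (1 + b0 - c0)| * (1 + b0 - c0) ≤ η + |β - b0| + |γ - c0| := by
    rw [← abs_of_pos (by linarith : 0 < 1 + b0 - c0), ← abs_mul, abs_of_pos (by linarith : 0 < 1 + b0 - c0), h1]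
    refine (abs_add_three _ _ _).trans ?_
    rw [abs_mul (β - b0), abs_mul (γ - c0), abs_of_nonneg hm0, abs_of_nonneg (by linarith : 0 ≤ 1 - m)]
    have := mul_le_of_le_one_right (abs_nonneg (β - b0)) (by linarith : 1 - m ≤ 1)
    have := mul_le_of_le_one_right (abs_nonneg (γ - c0)) hm1
    linarith
  nlinarith [abs_nonneg (m - b0 / (1 + b0 - c0))]


theorem Wmap_densities_tendsto_L1
    (s₁ s₂ p q r : ℝ) (hs₁ : 1 < s₁) (hs₂ : 1 < s₂)
    (hp : 0 < p) (hq : 0 < q) (hr : 0 < r)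
    (hsum : 1/s₁ + 1/s₂ ≤ 1)
    (a₁ : ℝ) (ha₁ : 0 < a₁) (μ : ℝ → Measure ℝ) (h : ℝ → ℝ → ℝ)
    (hμ : ∀ a, 0 < a → a < a₁ →
      Set.MapsTo (Wmap s₁ s₂ p q r a) (Set.Icc 0 1) (Set.Icc 0 1) ∧
      IsProbabilityMeasure (μ a) ∧
      (∀ᵐ x ∂(volume.restrict (Set.Icc (0:ℝ) 1)), 0 ≤ h a x) ∧
      μ a = (volume.restrict (Set.Icc (0:ℝ) 1)).withDensity
              (fun x => ENNReal.ofReal (h a x)) ∧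
      (∀ A : Set ℝ, MeasurableSet A → μ a (Wmap s₁ s₂ p q r a ⁻¹' A) = μ a A))
    (a₀ M : ℝ) (ha₀ : 0 < a₀) (hM : 0 < M)
    (hbdd : ∀ a, 0 < a → a < a₀ →
      ∀ᵐ x ∂(volume.restrict (Set.Icc (0:ℝ) 1)), h a x ≤ M) :
    Tendsto (fun a => ∫ x in Set.Icc (0:ℝ) 1, |h a x - h0 s₁ s₂ x|)
      (𝓝[>] (0:ℝ)) (𝓝 0) := by
  obtain ⟨θ, hθ⟩ : ∃ θ, θ = max (1/2) (max s₁⁻¹ s₂⁻¹) := ⟨_, rfl⟩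
  have hθ1 : θ < 1 := by
    rw [hθ]; exact max_lt (by norm_num) (max_lt (inv_lt_one_of_one_lt₀ hs₁) (inv_lt_one_of_one_lt₀ hs₂))
  have hθ2 : 1/2 ≤ θ := hθ ▸ le_max_left _ _
  have hθs : s₁⁻¹ ≤ θ := hθ ▸ (le_max_left _ _).trans (le_max_right _ _)
  have hθt : s₂⁻¹ ≤ θ := hθ ▸ (le_max_right _ _).trans (le_max_right _ _)
  obtain ⟨C, hC⟩ : ∃ C, C = (4 + 4 * M) / (1 - θ) := ⟨_, rfl⟩
  let bb : ℝ → ℝ := fun a => (s₁ + p*a - 1 - 2*(r*a))/(2*(s₁+p*a)) + 2 * (s₁+p*a)⁻¹ * (r*a)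
  let cc : ℝ → ℝ := fun a => (s₂ + q*a - 1 - 2*(r*a))/(2*(s₂+q*a)) + 2 * (s₂+q*a)⁻¹ * (r*a)
  have key : ∀ n : ℕ, ∀ᶠ a in 𝓝[>] (0:ℝ), ∫ x in Set.Icc (0:ℝ) 1, |h a x - h0 s₁ s₂ x| ≤
      10 * (C * θ ^ n) + (10 * (DD C n * (r * a)) + 4 * (|bb a - bb 0| + |cc a - cc 0|)) := by
    intro n
    have hpos : 0 < min (min a₁ a₀) (min (1/2/r) (min ((s₁-1)/2/r) ((s₂-1)/2/r))) := by
      have : 0 < s₁ - 1 := by linarith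
      have : 0 < s₂ - 1 := by linarith
      refine lt_min (lt_min ha₁ ha₀) (lt_min ?_ (lt_min ?_ ?_)) <;> positivity
    filter_upwards [Ioo_mem_nhdsGT hpos] with a ha
    obtain ⟨ha, ha'⟩ := ha
    simp only [lt_min_iff, lt_div_iff₀ hr] at ha'
    obtain ⟨⟨h1, h2⟩, h3, h4, h5⟩ := ha'
    obtain ⟨-, hprob, hh0, hμa, hinv⟩ := hμ a ha h1
    have hpa : 0 < p * a := by positivity
    have hqa : 0 < q * a := by positivity
    have hra : 0 < r * a := by positivity
    have hs : 0 < s₁ + p * a := by linarith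
    have ht : 0 < s₂ + q * a := by linarith
    obtain ⟨hg, G, hGm, hG0, hGi, hμG, hle⟩ := good_of hM hs ht hprob hh0 hμa hinv (hbdd a ha h2)
    have hbl : (s₁ + p*a - 1 - 2*(r*a))/(2*(s₁+p*a)) < 1/2 := by
      rw [div_lt_iff₀ (by positivity)]; linarith
    have hcl : (s₂ + q*a - 1 - 2*(r*a))/(2*(s₂+q*a)) < 1/2 := by
      rw [div_lt_iff₀ (by positivity)]; linarith
    have w : WP (s₁ + p*a) (s₂ + q*a) (r*a)
      ((s₁ + p*a - 1 - 2*(r*a))/(2*(s₁+p*a))) ((s₂ + q*a - 1 - 2*(r*a))/(2*(s₂+q*a))) θ := by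
      refine ⟨by linarith, by linarith, hra.le, by linarith, div_pos (by linarith) (by linarith),
        div_pos (by linarith) (by linarith), hbl, hcl, by field_simp, by field_simp, by linarith, by linarith, ?_, ?_, hθ1⟩
      · exact (inv_anti₀ (by linarith) (by linarith)).trans hθs
      · exact (inv_anti₀ (by linarith) (by linarith)).trans hθt
    have hden : 0 < 2*s₁*s₂+s₁-s₂ := by nlinarith
    have f1 := hle (h0 s₁ s₂) (hv_meas _ _)
    have f2 := final_a (HL := 2*s₁*(s₂+1)/(2*s₁*s₂+s₁-s₂)) (HR := 2*s₂*(s₁-1)/(2*s₁*s₂+s₁-s₂)) w hM hg hC n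
      (by rw [← add_div, div_eq_iff hden.ne']; ring) hGm hG0 hGi hμG
    have f3 := massR w hM hg C hC n
    have hb0 : bb 0 = (s₁ - 1)/(2*s₁) := by simp [bb]
    have hc0 : cc 0 = (s₂ - 1)/(2*s₂) := by simp [cc]
    have f4 := mass_final (b0 := bb 0) (c0 := cc 0) measureReal_nonneg measureReal_le_one
      (by rw [hb0]; exact div_pos (by linarith) (by linarith))
      (by rw [hc0, div_lt_iff₀ (by linarith)]; linarith) f3
    have f5 : 2*s₂*(s₁-1)/(2*s₁*s₂+s₁-s₂)/2 = bb 0 / (1 + bb 0 - cc 0) := by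
      have e1 : 1 + bb 0 - cc 0 = (2*s₁*s₂+s₁-s₂) / (2*s₁*s₂) := by
        rw [hb0, hc0]; field_simp; ring
      rw [e1, hb0]; field_simp
    rw [f5] at f2
    have f6 : ∫ x, |G x - h0 s₁ s₂ x| ∂lam = ∫ x, |G x - hv (2*s₁*(s₂+1)/(2*s₁*s₂+s₁-s₂)) (2*s₂*(s₁-1)/(2*s₁*s₂+s₁-s₂)) x| ∂lam := rfl
    rw [f6] at f1
    have f7 := f1.trans f2
    change _ ≤ 2 * (_ + |bb a - bb 0| + |cc a - cc 0|) at f4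
    linarith
  have hcb : ContinuousAt bb 0 := by
    have : s₁ + p * 0 ≠ 0 := by simp; linarith
    have : 2 * (s₁ + p * 0) ≠ 0 := by simp; linarith
    fun_prop (disch := assumption)
  have hcc : ContinuousAt cc 0 := by
    have : s₂ + q * 0 ≠ 0 := by simp; linarith
    have : 2 * (s₂ + q * 0) ≠ 0 := by simp; linarith
    fun_prop (disch := assumption)
  rw [Metric.tendsto_nhds]
  intro ε hε
  have hlim : Tendsto (fun n : ℕ => 10 * (C * θ ^ n)) atTop (𝓝 0) := by
    simpa using ((tendsto_pow_atTop_nhds_zero_of_lt_one (by linarith) hθ1).const_mul C).const_mul 10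
  obtain ⟨n, hn⟩ := (hlim.eventually (gt_mem_nhds (half_pos hε))).exists
  have hF : ContinuousAt (fun a => 10 * (DD C n * (r * a)) + 4 * (|bb a - bb 0| + |cc a - cc 0|)) 0 := by
    fun_prop
  have hF' := (hF.tendsto.mono_left (nhdsWithin_le_nhds (s := Set.Ioi 0))).eventually
    (gt_mem_nhds (show _ < ε/2 by simpa using hε))
  filter_upwards [key n, hF'] with a h1 h2
  rw [Real.dist_eq, sub_zero, abs_of_nonneg (integral_nonneg fun x => abs_nonneg _)]
  linarith
end

section
/- Take s₁ = s₂ = 2 and p = q = 1, and for r > 0 let W_{a,r} denote the corresponding map W_a and μ_{a,r} its acim. Then there exist sequences rₙ = n and aₙ → 0⁺ with rₙaₙ < 1/2 such that the maps τₙ = W_{aₙ,rₙ} satisfy: each τₙ is piecewise linear with |τₙ′(x)| > 2 on each branch, τₙ converges to W_0 (the map with s₁=s₂=2, a=0), and the acims μₙ = μ_{aₙ,rₙ} (each supported on all of [0,1]) converge *-weakly to the Dirac measure δ_{1/2}. Consequently the corresponding invariant densities have no uniform positive lower bound: there is no constant c > 0 such that every density hₙ satisfies hₙ ≥ c Lebesgue-almost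 everywhere on [0,1]. -/
open MeasureTheory Filter Topology

/-- Abstract data of the symmetric Markov map. -/
structure WH (W : ℝ → ℝ) (g l c : ℝ) (M : ℕ) (e : ℕ → ℝ) : Prop where
  hW : Measurable W
  g0 : 0 < g
  g1 : g ≤ 1/3
  l0 : 0 < l
  l1 : l < 1/2
  c1 : 1/2 < c
  c2 : c < 1 - g
  lc : l * c + g = 1/2
  es : ∀ j, e j = g + l * e (j+1)
  e0 : 1 - g - l * e 0 = c
  anti : StrictAnti e
  eM : e M = 0
  e2 : e 0 < 1/2
  w1 : ∀ u, 0 < u → u < g → u = -g * W u + g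
  w2 : ∀ u, g < u → u < 1/2 → u = l * W u + g
  w3 : ∀ u, 1/2 < u → u < 1 - g → u = -l * W u + (1 - g)
  w4 : ∀ u, 1 - g < u → u < 1 → u = g * W u + (1 - g)

theorem lint_affine (p q : ℝ) (hp : p ≠ 0) (G : ℝ → ENNReal) (hG : Measurable G) :
    ∫⁻ x, ENNReal.ofReal |p| * G (p*x+q) = ∫⁻ x, G x := by
  rw [lintegral_const_mul _ (by fun_prop)]
  have h1 : ∫⁻ x, G (p*x+q) = ∫⁻ y, G (y+q) ∂(Measure.map (p * ·) volume) := by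
    rw [lintegral_map (by fun_prop) (by fun_prop)]
  rw [h1, Real.map_volume_mul_left hp, lintegral_smul_measure,
    lintegral_add_right_eq_self (fun y => G y) q, smul_eq_mul, ← mul_assoc,
    ← ENNReal.ofReal_mul (abs_nonneg _), ← abs_mul, mul_inv_cancel₀ hp]
  simp

/-- Transfer operator on extended nonnegative functions. -/
noncomputable def PE (g l c : ℝ) (F : ℝ → ENNReal) (x : ℝ) : ENNReal :=
  ENNReal.ofReal g * F (-g * x + g) + ENNReal.ofReal g * F (g * x + (1 - g)) +
    if x < c then ENNReal.ofReal l * F (l * x + g) + ENNReal.ofReal l * F (-l * x + (1 - g)) else 0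

/-- Transfer operator on real functions. -/
noncomputable def PR (g l c : ℝ) (F : ℝ → ℝ) (x : ℝ) : ℝ :=
  g * F (-g * x + g) + g * F (g * x + (1 - g)) +
    if x < c then l * F (l * x + g) + l * F (-l * x + (1 - g)) else 0

theorem PE_meas (g l c : ℝ) {F : ℝ → ENNReal} (hF : Measurable F) : Measurable (PE g l c F) := by
  unfold PE
  refine Measurable.add (by fun_prop) (Measurable.ite measurableSet_Iio (by fun_prop) (by fun_prop))

theorem PR_meas (g l c : ℝ) {F : ℝ → ℝ} (hF : Measurable F) : Measurable (PR g l c F) := by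
  unfold PR
  refine Measurable.add (by fun_prop) (Measurable.ite measurableSet_Iio (by fun_prop) (by fun_prop))

section
variable {W : ℝ → ℝ} {g l c : ℝ} {M : ℕ} {e : ℕ → ℝ}

theorem WH.piece (p q : ℝ) (hW : Measurable W) (B A : Set ℝ) (hB : MeasurableSet B)
    (hA : MeasurableSet A) (hp : p ≠ 0)
    (hw : ∀ u ∈ B, u = p * W u + q) (F : ℝ → ENNReal) (hF : Measurable F) :
    ∫⁻ x, A.indicator (fun x => B.indicator (fun u => ENNReal.ofReal |p| * F u) (p * x + q)) x
      = ∫⁻ u, (B ∩ W ⁻¹' A).indicator F u := by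
  rw [← lint_affine p q hp _ (hF.indicator (hB.inter (hW hA)))]
  congr 1
  ext x
  by_cases hb : p * x + q ∈ B
  · have h1 : W (p * x + q) = x := by
      have := hw _ hb
      have h2 : p * x = p * W (p * x + q) := by linarith
      exact (mul_left_cancel₀ hp h2).symm
    by_cases hx : x ∈ A
    · simp [hb, hx, h1]
    · simp [hx, h1]
  · by_cases hx : x ∈ A <;> simp [hb, hx]

theorem WH.transfer (H : WH W g l c M e) (F : ℝ → ENNReal) (hF : Measurable F) (A : Set ℝ)
    (hA : MeasurableSet A) (hA1 : A ⊆ Set.Ioo 0 1) :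
    ∫⁻ x in A, PE g l c F x = ∫⁻ u in Set.Ioo 0 1 ∩ W ⁻¹' A, F u := by
  have hg0 := H.g0
  have hl0 := H.l0
  have hg1 := H.g1
  have hc1 := H.c1
  have hlc := H.lc
  have q1 := WH.piece (-g) g H.hW (Set.Ioo 0 g) A measurableSet_Ioo hA (by linarith)
    (fun u hu => H.w1 u hu.1 hu.2) F hF
  have q2 := WH.piece l g H.hW (Set.Ioo g (1/2)) A measurableSet_Ioo hA (by linarith)
    (fun u hu => H.w2 u hu.1 hu.2) F hF
  have q3 := WH.piece (-l) (1-g) H.hW (Set.Ioo (1/2) (1-g)) A measurableSet_Ioo hA (by linarith)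
    (fun u hu => H.w3 u hu.1 hu.2) F hF
  have q4 := WH.piece g (1-g) H.hW (Set.Ioo (1-g) 1) A measurableSet_Ioo hA (by linarith)
    (fun u hu => H.w4 u hu.1 hu.2) F hF
  have mI : ∀ p q : ℝ, ∀ B : Set ℝ, MeasurableSet B → Measurable (A.indicator (fun x => B.indicator (fun u => ENNReal.ofReal |p| * F u) (p * x + q))) := by
    intro p q B hB
    refine Measurable.indicator ?_ hA
    have : Measurable (B.indicator (fun u => ENNReal.ofReal |p| * F u)) :=
      Measurable.indicator (by fun_prop) hB
    exact this.comp (by fun_prop)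
  have mJ : ∀ B : Set ℝ, MeasurableSet B → Measurable ((B ∩ W ⁻¹' A).indicator F) := 
    fun B hB => hF.indicator (hB.inter (H.hW hA))
  have L : ∫⁻ x in A, PE g l c F x = 
     ∫⁻ x, (A.indicator (fun x => (Set.Ioo 0 g).indicator (fun u => ENNReal.ofReal |-g| * F u) (-g * x + g)) x
      + A.indicator (fun x => (Set.Ioo (1-g) 1).indicator (fun u => ENNReal.ofReal |g| * F u) (g * x + (1-g))) x
      + (A.indicator (fun x => (Set.Ioo g (1/2)).indicator (fun u => ENNReal.ofReal |l| * F u) (l * x + g)) x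
      + A.indicator (fun x => (Set.Ioo (1/2) (1-g)).indicator (fun u => ENNReal.ofReal |-l| * F u) (-l * x + (1-g))) x)) := by
    rw [← lintegral_indicator hA]
    congr 1
    ext x
    by_cases hx : x ∈ A
    · obtain ⟨x0, x1⟩ := hA1 hx
      have i1 : -g * x + g ∈ Set.Ioo 0 g := ⟨by nlinarith, by nlinarith⟩
      have i4 : g * x + (1-g) ∈ Set.Ioo (1-g) 1 := ⟨by nlinarith, by nlinarith⟩
      simp only [Set.indicator_of_mem hx, Set.indicator_of_mem i1, Set.indicator_of_mem i4, abs_neg,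
        abs_of_pos hg0, abs_of_pos hl0, PE]
      congr 1
      split_ifs with h
      · have i2 : l * x + g ∈ Set.Ioo g (1/2) := ⟨by nlinarith, by nlinarith⟩
        have i3 : -l * x + (1-g) ∈ Set.Ioo (1/2) (1-g) := ⟨by nlinarith, by nlinarith⟩
        simp only [Set.indicator_of_mem i2, Set.indicator_of_mem i3]
      · have i2 : l * x + g ∉ Set.Ioo g (1/2) := fun h' => by have := h'.2; nlinarith
        have i3 : -l * x + (1-g) ∉ Set.Ioo (1/2) (1-g) := fun h' => by have := h'.1; nlinarith
        simp only [Set.indicator_of_notMem i2, Set.indicator_of_notMem i3, add_zero]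
    · simp [hx]
  have R : ∫⁻ u in Set.Ioo 0 1 ∩ W ⁻¹' A, F u = 
     ∫⁻ u, ((Set.Ioo 0 g ∩ W ⁻¹' A).indicator F u + (Set.Ioo (1-g) 1 ∩ W ⁻¹' A).indicator F u
      + ((Set.Ioo g (1/2) ∩ W ⁻¹' A).indicator F u + (Set.Ioo (1/2) (1-g) ∩ W ⁻¹' A).indicator F u)) := by
    rw [← lintegral_indicator (measurableSet_Ioo.inter (H.hW hA))]
    apply lintegral_congr_ae
    have n1 : ∀ y : ℝ, ∀ᵐ x : ℝ, x ≠ y := fun y => by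
      simp [ae_iff]
    filter_upwards [n1 g, n1 (1/2), n1 (1-g)] with u a1 a2 a3
    by_cases hu : u ∈ W ⁻¹' A
    · simp only [Set.indicator, Set.mem_inter_iff, hu, and_true, Set.mem_Ioo]
      rcases lt_or_gt_of_ne a1 with b1 | b1
      · have : u < 1/2 := by linarith
        have : u < 1 - g := by linarith
        have : u < 1 := by linarith
        have : ¬ g < u := by linarith
        have : ¬ 1 - g < u := by linarith
        have : ¬ 1/2 < u := by linarith
        simp only [*]; simp
      rcases lt_or_gt_of_ne a2 with b2 | b2
      · have : u < 1 - g := by linarith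
        have : u < 1 := by linarith
        have : 0 < u := by linarith
        have : ¬ u < g := by linarith
        have : ¬ 1 - g < u := by linarith
        have : ¬ 1/2 < u := by linarith
        simp only [*]; simp
      have : ¬ u < 1/2 := by linarith
      have : ¬ u < g := by linarith
      have : 0 < u := by linarith
      rcases lt_or_gt_of_ne a3 with b3 | b3
      · have : u < 1 := by linarith
        have : ¬ 1 - g < u := by linarith
        simp only [*]; simp
      · have : ¬ u < 1 - g := by linarith
        simp only [*]; simp
    · simp [hu]
  rw [L, R, lintegral_add_left, lintegral_add_left, lintegral_add_left, lintegral_add_left,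
    lintegral_add_left, lintegral_add_left, q1, q2, q3, q4]
  all_goals first
    | exact mI _ _ _ measurableSet_Ioo 
    | exact mJ _ measurableSet_Ioo 
    | exact (mI _ _ _ measurableSet_Ioo).add (mI _ _ _ measurableSet_Ioo)
    | exact (mJ _ measurableSet_Ioo).add (mJ _ measurableSet_Ioo)

theorem WH.contr (H : WH W g l c M e) (f₁ f₂ : ℝ → ℝ) (h1 : Measurable f₁) (h2 : Measurable f₂) :
    ∫⁻ x in Set.Ioo 0 1, ‖PR g l c f₁ x - PR g l c f₂ x‖ₑ ≤ ∫⁻ x in Set.Ioo 0 1, ‖f₁ x - f₂ x‖ₑ := by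
  have hm : Measurable (fun x => ‖f₁ x - f₂ x‖ₑ) := by fun_prop
  calc _ ≤ ∫⁻ x in Set.Ioo 0 1, PE g l c (fun x => ‖f₁ x - f₂ x‖ₑ) x := by
        apply lintegral_mono
        intro x
        have hg : ENNReal.ofReal g = ‖g‖ₑ := by rw [Real.enorm_of_nonneg H.g0.le]
        have hl : ENNReal.ofReal l = ‖l‖ₑ := by rw [Real.enorm_of_nonneg H.l0.le]
        simp only [PR, PE, hg, hl, ← enorm_mul]
        split_ifs
        · refine le_trans (le_of_eq ?_) ((enorm_add_le _ _).trans (add_le_add (enorm_add_le _ _) (enorm_add_le _ _)))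
          congr 1; ring
        · refine le_trans (le_of_eq ?_) ((enorm_add_le _ _).trans_eq (add_zero _).symm)
          congr 1; ring
    _ = ∫⁻ u in Set.Ioo 0 1 ∩ W ⁻¹' (Set.Ioo 0 1), ‖f₁ u - f₂ u‖ₑ :=
        H.transfer _ hm _ measurableSet_Ioo le_rfl
    _ ≤ _ := lintegral_mono_set Set.inter_subset_left

theorem WH.inv (H : WH W g l c M e) (f : ℝ → ℝ) (h1 : Measurable f) (hf : ∀ x, 0 ≤ f x)
    (hinv : ∀ A, MeasurableSet A → 
      ∫⁻ x in Set.Ioo 0 1 ∩ W ⁻¹' A, ENNReal.ofReal (f x) = ∫⁻ x in Set.Ioo 0 1 ∩ A, ENNReal.ofReal (f x)) :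
    ∀ᵐ x ∂(volume.restrict (Set.Ioo (0:ℝ) 1)), f x = PR g l c f x := by
  have key : (fun x => ENNReal.ofReal (f x)) =ᵐ[volume.restrict (Set.Ioo (0:ℝ) 1)] 
      PE g l c (fun x => ENNReal.ofReal (f x)) := by
    apply ae_eq_of_forall_setLIntegral_eq_of_sigmaFinite (by fun_prop) (PE_meas _ _ _ (by fun_prop))
    intro s hs _
    rw [Measure.restrict_restrict hs, H.transfer _ (by fun_prop) _ (hs.inter measurableSet_Ioo) Set.inter_subset_right,
      hinv _ (hs.inter measurableSet_Ioo)]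
    congr 2
    ext x; simp
  filter_upwards [key] with x hx
  have hg := H.g0
  have hl := H.l0
  have e1 : PE g l c (fun x => ENNReal.ofReal (f x)) x = ENNReal.ofReal (PR g l c f x) := by
    simp only [PE, PR]
    have p1 := hf (-g * x + g)
    have p2 := hf (g * x + (1 - g))
    have p3 := hf (l * x + g)
    have p4 := hf (-l * x + (1 - g))
    split_ifs
    · rw [ENNReal.ofReal_add (by positivity) (by positivity), ENNReal.ofReal_add (by positivity) (by positivity),
        ENNReal.ofReal_add (by positivity) (by positivity), ENNReal.ofReal_mul hg.le, ENNReal.ofReal_mul hg.le,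
        ENNReal.ofReal_mul hl.le, ENNReal.ofReal_mul hl.le]
    · rw [add_zero, add_zero, ENNReal.ofReal_add (by positivity) (by positivity), ENNReal.ofReal_mul hg.le, ENNReal.ofReal_mul hg.le]
  rw [e1] at hx
  refine (ENNReal.ofReal_eq_ofReal_iff (hf x) ?_).1 hx
  have p1 := hf (-g * x + g)
  have p2 := hf (g * x + (1 - g))
  have p3 := hf (l * x + g)
  have p4 := hf (-l * x + (1 - g))
  unfold PR; split_ifs <;> positivity

/-- No partition point weakly separates `x` and `y`. -/
def NS (c : ℝ) (M : ℕ) (e : ℕ → ℝ) (x y : ℝ) : Prop :=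
  ((x < c ∧ y < c) ∨ (c < x ∧ c < y)) ∧ ∀ j < M, ((x < e j ∧ y < e j) ∨ (e j < x ∧ e j < y))

/-- Piecewise Lipschitz functions. -/
def PL (c : ℝ) (M : ℕ) (e : ℕ → ℝ) (K : ℝ) (f : ℝ → ℝ) : Prop :=
  ∀ x ∈ Set.Ioo (0:ℝ) 1, ∀ y ∈ Set.Ioo (0:ℝ) 1, NS c M e x y → |f x - f y| ≤ K * |x - y|

theorem WH.lastg (H : WH W g l c M e) : ∃ N, M = N + 1 ∧ e N = g := by
  rcases M with _ | N
  · exfalso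
    have h1 := H.e0
    have h2 := H.eM
    have h3 := H.c2
    rw [h2] at h1
    linarith
  · exact ⟨N, rfl, by rw [H.es N, H.eM]; ring⟩

theorem WH.ege (H : WH W g l c M e) (j : ℕ) (hj : j < M) : g ≤ e j := by
  obtain ⟨N, rfl, hN⟩ := H.lastg
  rw [← hN]; exact H.anti.antitone (by omega)

theorem WH.ele (H : WH W g l c M e) (j : ℕ) : e j < 1/2 :=
  lt_of_le_of_lt (H.anti.antitone (Nat.zero_le j)) H.e2

set_option maxHeartbeats 1000000 in
theorem WH.lip (H : WH W g l c M e) (K : ℝ) (hK : 0 ≤ K) (f : ℝ → ℝ) (hf : PL c M e K f) :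
    PL c M e (3/4*K) (PR g l c f) := by
  intro x hx y hy hxy
  obtain ⟨x0, x1⟩ := hx
  obtain ⟨y0, y1⟩ := hy
  have hg0 := H.g0
  have hl0 := H.l0
  have hl1 := H.l1
  have hg1 := H.g1
  have hc1 := H.c1
  have hc2 := H.c2
  have hlc := H.lc
  have a1 : 0 < g * x := by positivity
  have a2 : g * x < g := by linarith [mul_lt_mul_of_pos_left x1 hg0]
  have a3 : 0 < g * y := by positivity
  have a4 : g * y < g := by linarith [mul_lt_mul_of_pos_left y1 hg0]
  have k1 : |f (-g * x + g) - f (-g * y + g)| ≤ K * |(-g * x + g) - (-g * y + g)| := by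
    apply hf _ ⟨by linarith, by linarith⟩ _ ⟨by linarith, by linarith⟩
    refine ⟨Or.inl ⟨by linarith, by linarith⟩, fun j hj => Or.inl ?_⟩
    have := H.ege j hj
    exact ⟨by linarith, by linarith⟩
  have k4 : |f (g * x + (1-g)) - f (g * y + (1-g))| ≤ K * |(g * x + (1-g)) - (g * y + (1-g))| := by
    apply hf _ ⟨by linarith, by linarith⟩ _ ⟨by linarith, by linarith⟩
    refine ⟨Or.inr ⟨by linarith, by linarith⟩, fun j hj => Or.inr ?_⟩
    have := H.ele j
    exact ⟨by linarith, by linarith⟩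
  have r1 : |(-g * x + g) - (-g * y + g)| = g * |x - y| := by
    rw [← abs_of_pos hg0, ← abs_mul, abs_of_pos hg0, ← abs_neg]; ring_nf
  have r4 : |(g * x + (1-g)) - (g * y + (1-g))| = g * |x - y| := by
    rw [← abs_of_pos hg0, ← abs_mul, abs_of_pos hg0]; ring_nf
  have r2 : |(l * x + g) - (l * y + g)| = l * |x - y| := by
    rw [← abs_of_pos hl0, ← abs_mul, abs_of_pos hl0]; ring_nf
  have r3 : |(-l * x + (1-g)) - (-l * y + (1-g))| = l * |x - y| := by
    rw [← abs_of_pos hl0, ← abs_mul, abs_of_pos hl0, ← abs_neg]; ring_nf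
  rw [r1] at k1
  rw [r4] at k4
  have hKd : 0 ≤ K * |x - y| := by positivity
  have m1 := mul_le_mul_of_nonneg_left k1 hg0.le
  have m4 := mul_le_mul_of_nonneg_left k4 hg0.le
  have gg : g * (g * (K * |x - y|)) ≤ 1/9 * (K * |x - y|) := by
    rw [← mul_assoc]; apply mul_le_mul_of_nonneg_right _ hKd; nlinarith
  have ll : l * (l * (K * |x - y|)) ≤ 1/4 * (K * |x - y|) := by
    rw [← mul_assoc]; apply mul_le_mul_of_nonneg_right _ hKd; nlinarith
  rcases hxy.1 with ⟨xc, yc⟩ | ⟨xc, yc⟩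
  · have b1 : 0 < l * x := by positivity
    have b2 : l * x + g < 1/2 := by linarith [mul_lt_mul_of_pos_left xc hl0]
    have b3 : 0 < l * y := by positivity
    have b4 : l * y + g < 1/2 := by linarith [mul_lt_mul_of_pos_left yc hl0]
    have k2 : |f (l * x + g) - f (l * y + g)| ≤ K * |(l * x + g) - (l * y + g)| := by
      apply hf _ ⟨by linarith, by linarith⟩ _ ⟨by linarith, by linarith⟩
      refine ⟨Or.inl ⟨by linarith, by linarith⟩, fun j hj => ?_⟩
      by_cases hj' : j + 1 < M
      · rw [H.es j]
        rcases hxy.2 _ hj' with ⟨h1, h2⟩ | ⟨h1, h2⟩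
        · have h1 := mul_lt_mul_of_pos_left h1 hl0
          have h2 := mul_lt_mul_of_pos_left h2 hl0
          left; exact ⟨by linarith, by linarith⟩
        · have h1 := mul_lt_mul_of_pos_left h1 hl0
          have h2 := mul_lt_mul_of_pos_left h2 hl0
          right; exact ⟨by linarith, by linarith⟩
      · right
        have : j + 1 = M := by omega
        rw [H.es j, this, H.eM]
        exact ⟨by linarith, by linarith⟩
    have k3 : |f (-l * x + (1-g)) - f (-l * y + (1-g))| ≤ K * |(-l * x + (1-g)) - (-l * y + (1-g))| := by
      apply hf _ ⟨by linarith, by linarith⟩ _ ⟨by linarith, by linarith⟩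
      refine ⟨?_, fun j hj => Or.inr ?_⟩
      · rw [← H.e0]
        have : 0 < M := by
          obtain ⟨N, rfl, -⟩ := H.lastg
          omega
        rcases hxy.2 _ this with ⟨h1, h2⟩ | ⟨h1, h2⟩
        · have h1 := mul_lt_mul_of_pos_left h1 hl0
          have h2 := mul_lt_mul_of_pos_left h2 hl0
          right; exact ⟨by linarith, by linarith⟩
        · have h1 := mul_lt_mul_of_pos_left h1 hl0
          have h2 := mul_lt_mul_of_pos_left h2 hl0
          left; exact ⟨by linarith, by linarith⟩
      · have := H.ele j
        exact ⟨by linarith, by linarith⟩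
    rw [r2] at k2
    rw [r3] at k3
    have m2 := mul_le_mul_of_nonneg_left k2 hl0.le
    have m3 := mul_le_mul_of_nonneg_left k3 hl0.le
    rw [← abs_of_pos hg0, ← abs_mul, abs_of_pos hg0] at m1 m4
    rw [← abs_of_pos hl0, ← abs_mul, abs_of_pos hl0] at m2 m3
    simp only [PR, if_pos xc, if_pos yc]
    rw [abs_le] at m1 m2 m3 m4 ⊢
    constructor <;> linarith [m1.1, m1.2, m2.1, m2.2, m3.1, m3.2, m4.1, m4.2]
  · simp only [PR, if_neg (not_lt_of_gt xc), if_neg (not_lt_of_gt yc)]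
    rw [← abs_of_pos hg0, ← abs_mul, abs_of_pos hg0] at m1 m4
    rw [abs_le] at m1 m4 ⊢
    constructor <;> linarith [m1.1, m1.2, m4.1, m4.2]

theorem WH.approx (H : WH W g l c M e) (f : ℝ → ℝ) (hm : Measurable f)
    (hi : Integrable f (volume.restrict (Set.Ioo (0:ℝ) 1)))
    (hP : ∀ᵐ x ∂(volume.restrict (Set.Ioo (0:ℝ) 1)), f x = PR g l c f x) (ε : ℝ) (hε : 0 < ε) :
    ∃ h : ℝ → ℝ, Measurable h ∧ 
      eLpNorm (h - f) 1 (volume.restrict (Set.Ioo (0:ℝ) 1)) ≤ ENNReal.ofReal ε ∧ PL c M e ε h := by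
  obtain ⟨φ, hφ1, hφ2, hφ3⟩ := (memLp_one_iff_integrable.2 hi).exist_eLpNorm_sub_le
    ENNReal.one_ne_top le_rfl hε
  obtain ⟨C, hC⟩ := hφ2.lipschitzWith_of_hasCompactSupport hφ1 (by simp)
  have hφm : Measurable φ := hφ2.continuous.measurable
  have step : ∀ N : ℕ, Measurable ((PR g l c)^[N] φ) ∧ 
      ∫⁻ x in Set.Ioo 0 1, ‖f x - (PR g l c)^[N] φ x‖ₑ ≤ ∫⁻ x in Set.Ioo 0 1, ‖f x - φ x‖ₑ ∧ 
      PL c M e ((3/4)^N * C) ((PR g l c)^[N] φ) := by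
    intro N
    induction N with
    | zero =>
      refine ⟨hφm, le_rfl, ?_⟩
      intro x _ y _ _
      have := hC.dist_le_mul x y
      simpa [Real.dist_eq] using this
    | succ N ih =>
      obtain ⟨i1, i2, i3⟩ := ih
      rw [Function.iterate_succ']
      refine ⟨PR_meas _ _ _ i1, ?_, ?_⟩
      · refine le_trans ?_ i2
        refine le_trans (le_of_eq ?_) (H.contr f _ hm i1)
        apply lintegral_congr_ae
        filter_upwards [hP] with x hx
        simp only [Function.comp]
        rw [← hx]
      · have := H.lip _ (by positivity) _ i3
        rw [← mul_assoc, mul_comm (3/4:ℝ), ← pow_succ] at this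
        exact this
  have hlim : Tendsto (fun N : ℕ => (3/4:ℝ)^N * C) atTop (𝓝 (0 * C)) :=
    (tendsto_pow_atTop_nhds_zero_of_lt_one (by norm_num) (by norm_num)).mul_const _
  rw [zero_mul] at hlim
  obtain ⟨N, hN⟩ := (hlim.eventually (gt_mem_nhds hε)).exists
  obtain ⟨i1, i2, i3⟩ := step N
  refine ⟨_, i1, ?_, ?_⟩
  · rw [eLpNorm_sub_comm]
    rw [eLpNorm_one_eq_lintegral_enorm] at hφ3 ⊢
    exact le_trans i2 hφ3
  · intro x hx y hy hxy
    exact (i3 x hx y hy hxy).trans (mul_le_mul_of_nonneg_right hN.le (abs_nonneg _))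

theorem WH.const (H : WH W g l c M e) (f : ℝ → ℝ) (hm : Measurable f)
    (hi : Integrable f (volume.restrict (Set.Ioo (0:ℝ) 1)))
    (hP : ∀ᵐ x ∂(volume.restrict (Set.Ioo (0:ℝ) 1)), f x = PR g l c f x) (p q : ℝ) (hp : 0 ≤ p)
    (hq : q ≤ 1) (hpq : p < q) (hc : c ≤ p ∨ q ≤ c) (he : ∀ j < M, e j ≤ p ∨ q ≤ e j) :
    ∃ u : ℝ, ∀ᵐ x, x ∈ Set.Ioo p q → f x = u := by
  have hpos : ∀ k : ℕ, (0:ℝ) < 1 / ((k:ℝ) + 1) := fun k => by positivity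
  choose h h1 h2 h3 using fun k : ℕ => H.approx f hm hi hP (1 / ((k:ℝ) + 1)) (hpos k)
  have hl : Tendsto (fun k : ℕ => (1:ℝ) / ((k:ℝ) + 1)) atTop (𝓝 0) :=
    tendsto_one_div_add_atTop_nhds_zero_nat
  have hl2 : Tendsto (fun k : ℕ => eLpNorm (h k - f) 1 (volume.restrict (Set.Ioo (0:ℝ) 1))) atTop (𝓝 0) := by
    refine tendsto_of_tendsto_of_tendsto_of_le_of_le tendsto_const_nhds ?_ (fun _ => zero_le) h2
    simpa using ENNReal.tendsto_ofReal hl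
  obtain ⟨ns, hns, hae⟩ := (tendstoInMeasure_of_tendsto_eLpNorm one_ne_zero 
    (fun n => (h1 n).aestronglyMeasurable) hm.aestronglyMeasurable hl2).exists_seq_tendsto_ae
  rw [ae_restrict_iff' measurableSet_Ioo] at hae
  have key : ∀ x y, x ∈ Set.Ioo p q → y ∈ Set.Ioo p q → 
      Tendsto (fun i => h (ns i) x) atTop (𝓝 (f x)) → Tendsto (fun i => h (ns i) y) atTop (𝓝 (f y)) → 
      f x = f y := by
    intro x y hx hy tx ty
    have hns' : NS c M e x y := by
      refine ⟨?_, fun j hj => ?_⟩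
      · rcases hc with hc | hc
        · right; exact ⟨by linarith [hx.1], by linarith [hy.1]⟩
        · left; exact ⟨by linarith [hx.2], by linarith [hy.2]⟩
      · rcases he j hj with hc | hc
        · right; exact ⟨by linarith [hx.1], by linarith [hy.1]⟩
        · left; exact ⟨by linarith [hx.2], by linarith [hy.2]⟩
    have t1 : Tendsto (fun i => |h (ns i) x - h (ns i) y|) atTop (𝓝 |f x - f y|) := (tx.sub ty).abs
    have t2 : Tendsto (fun i => (1:ℝ) / ((ns i : ℝ) + 1) * |x - y|) atTop (𝓝 (0 * |x - y|)) :=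
      (hl.comp hns.tendsto_atTop).mul_const _
    have := le_of_tendsto_of_tendsto' t1 t2 (fun i => h3 (ns i) x ⟨by linarith [hx.1], by linarith [hx.2]⟩ y 
      ⟨by linarith [hy.1], by linarith [hy.2]⟩ hns')
    rw [zero_mul] at this
    have := abs_nonpos_iff.1 this
    linarith
  have hne : ∃ x ∈ Set.Ioo p q, Tendsto (fun i => h (ns i) x) atTop (𝓝 (f x)) := by
    by_contra hcon
    push Not at hcon
    have : ∀ᵐ x : ℝ, x ∉ Set.Ioo p q := by
      filter_upwards [hae] with x hx hx'
      exact hcon x hx' (hx ⟨by linarith [hx'.1], by linarith [hx'.2]⟩)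
    have h0 : volume (Set.Ioo p q) = 0 := measure_eq_zero_iff_ae_notMem.2 this
    rw [Real.volume_Ioo] at h0
    simp at h0; linarith
  obtain ⟨y, hy, ty⟩ := hne
  refine ⟨f y, ?_⟩
  filter_upwards [hae] with x hx hx'
  exact key x y hx' hy (hx ⟨by linarith [hx'.1], by linarith [hx'.2]⟩) ty

theorem ae_affine {P : ℝ → Prop} (h : ∀ᵐ x, P x) (p q : ℝ) (hp : p ≠ 0) : ∀ᵐ x, P (p * x + q) := by
  have h1 : ∀ᵐ y : ℝ, P (y + q) := 
    (measurePreserving_add_right volume q).quasiMeasurePreserving.ae h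
  have h2 : Measure.QuasiMeasurePreserving (fun x : ℝ => p * x) volume volume := by
    refine ⟨by fun_prop, ?_⟩
    rw [Real.map_volume_mul_left hp]
    exact Measure.smul_absolutelyContinuous
  exact h2.ae h1

theorem exists_of_ae {P : ℝ → Prop} {p q : ℝ} (hpq : p < q) (h : ∀ᵐ x, P x) : ∃ x ∈ Set.Ioo p q, P x := by
  by_contra hcon
  push Not at hcon
  have : ∀ᵐ x : ℝ, x ∉ Set.Ioo p q := by
    filter_upwards [h] with x hx hx'
    exact hcon x hx' hx
  have h0 : volume (Set.Ioo p q) = 0 := measure_eq_zero_iff_ae_notMem.2 this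
  rw [Real.volume_Ioo] at h0
  simp at h0; linarith

theorem WH.values (H : WH W g l c M e) (f : ℝ → ℝ) (hm : Measurable f) (hf : ∀ x, 0 ≤ f x)
    (hi : Integrable f (volume.restrict (Set.Ioo (0:ℝ) 1)))
    (hP : ∀ᵐ x ∂(volume.restrict (Set.Ioo (0:ℝ) 1)), f x = PR g l c f x) :
    ∃ u0 u1 : ℝ, ∃ v : ℕ → ℝ, 0 ≤ u0 ∧ 0 ≤ u1 ∧ u1 = u0 + 2 * l * u1 ∧ v 0 = u0 + l * (u1 + u0) ∧
      (∀ j, j + 1 < M → v (j+1) = u0 + l * (v j + u0)) ∧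
      (∀ᵐ x, x ∈ Set.Ioo c 1 → f x = u0) ∧ (∀ᵐ x, x ∈ Set.Ioo (e 0) c → f x = u1) ∧
      (∀ j < M, ∀ᵐ x, x ∈ Set.Ioo (e (j+1)) (e j) → f x = v j) := by
  have hg0 := H.g0
  have hl0 := H.l0
  have hl1 := H.l1
  have hg1 := H.g1
  have hc1 := H.c1
  have hc2 := H.c2
  have hlc := H.lc
  have he2 := H.e2
  have he0 := H.e0
  obtain ⟨N, hN, heN⟩ := H.lastg
  have enn : ∀ j, j ≤ M → 0 ≤ e j := fun j hj => by
    rw [← H.eM]; exact H.anti.antitone hj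
  have elt : ∀ j, e (j+1) < e j := fun j => H.anti (Nat.lt_succ_self j)
  obtain ⟨u0, hu0⟩ := H.const f hm hi hP c 1 (by linarith) le_rfl (by linarith) (Or.inl le_rfl)
    (fun j _ => Or.inl (by linarith [H.ele j]))
  obtain ⟨u1, hu1⟩ := H.const f hm hi hP (e 0) c (enn 0 (by omega)) (by linarith) (by linarith) (Or.inr le_rfl)
    (fun j _ => Or.inl (H.anti.antitone (Nat.zero_le j)))
  have hv : ∀ j, ∃ v : ℝ, j < M → ∀ᵐ x, x ∈ Set.Ioo (e (j+1)) (e j) → f x = v := by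
    intro j
    by_cases hj : j < M
    · obtain ⟨v, hv⟩ := H.const f hm hi hP (e (j+1)) (e j) (enn _ hj) (by linarith [H.ele j]) (elt j)
        (Or.inr (by linarith [H.ele j])) (fun i _ => by
          rcases Nat.lt_or_ge j i with h | h
          · left; exact H.anti.antitone h
          · right; exact H.anti.antitone h)
      exact ⟨v, fun _ => hv⟩
    · exact ⟨0, fun h => absurd h hj⟩
  choose v hv using hv
  rw [ae_restrict_iff' measurableSet_Ioo] at hP
  have hvN := hv N (by omega)
  rw [← hN, H.eM, heN] at hvN
  have A1 := ae_affine hvN (-g) g (by linarith)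
  have A4 := ae_affine hu0 g (1-g) (by linarith)
  have out : ∀ᵐ x, x ∈ Set.Ioo (0:ℝ) 1 → f x = g * v N + g * u0 + 
      if x < c then l * f (l * x + g) + l * f (-l * x + (1 - g)) else 0 := by
    filter_upwards [hP, A1, A4] with x h1 h2 h3 hx
    have a1 : 0 < g * x := mul_pos hg0 hx.1
    have a2 : g * x < g := by linarith [mul_lt_mul_of_pos_left hx.2 hg0]
    rw [h1 hx, PR, h2 ⟨by linarith, by linarith⟩, h3 ⟨by linarith, by linarith⟩]
  have E0 : u0 = g * v N + g * u0 := by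
    obtain ⟨x, hx, h1, h2⟩ := exists_of_ae (show c < 1 by linarith) (out.and hu0)
    have := h1 ⟨by linarith [hx.1], hx.2⟩
    rw [h2 hx, if_neg (not_lt_of_gt hx.1)] at this
    linarith
  have out2 : ∀ᵐ x, x ∈ Set.Ioo (0:ℝ) c → f x = u0 + (l * f (l * x + g) + l * f (-l * x + (1 - g))) := by
    filter_upwards [out] with x h1 hx
    rw [h1 ⟨hx.1, by linarith [hx.2]⟩, if_pos hx.2, ← E0]
  have B2 := ae_affine hu1 l g (by linarith)
  have B3 := ae_affine hu1 (-l) (1-g) (by linarith)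
  have B4 := ae_affine hu0 (-l) (1-g) (by linarith)
  refine ⟨u0, u1, v, ?_, ?_, ?_, ?_, ?_, hu0, hu1, hv⟩
  · obtain ⟨x, hx, h2⟩ := exists_of_ae (show c < 1 by linarith) hu0
    rw [← h2 hx]; exact hf x
  · obtain ⟨x, hx, h2⟩ := exists_of_ae (show e 0 < c by linarith) hu1
    rw [← h2 hx]; exact hf x
  · obtain ⟨x, hx, h1, h2, h3, h4⟩ := exists_of_ae (show e 0 < c by linarith) (out2.and (hu1.and (B2.and B3)))
    have x0 : 0 < x := by linarith [hx.1, enn 0 (by omega)]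
    have m1 := mul_lt_mul_of_pos_left hx.1 hl0
    have m2 := mul_lt_mul_of_pos_left hx.2 hl0
    have es0 := H.es 0
    have m3 := mul_lt_mul_of_pos_left (elt 0) hl0
    have := h1 ⟨x0, hx.2⟩
    rw [h2 hx, h3 ⟨by linarith, by linarith⟩, h4 ⟨by linarith, by linarith⟩] at this
    linarith
  · obtain ⟨x, hx, h1, h2, h3, h4⟩ := exists_of_ae (elt 0) (out2.and ((hv 0 (by omega)).and (B2.and B4)))
    have x0 : 0 < x := by linarith [hx.1, enn 1 (by omega)]
    have m1 := mul_lt_mul_of_pos_left hx.1 hl0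
    have m2 := mul_lt_mul_of_pos_left hx.2 hl0
    have m3 := mul_pos hl0 x0
    have es0 := H.es 0
    simp only [zero_add] at *
    have m4 : l * e 0 < l * c := mul_lt_mul_of_pos_left (by linarith) hl0
    have := h1 ⟨x0, by linarith [hx.2]⟩
    rw [h2 hx, h3 ⟨by linarith, by linarith⟩, h4 ⟨by linarith, by linarith⟩] at this
    linarith
  · intro j hj
    have B5 := ae_affine (hv j (by omega)) l g (by linarith)
    obtain ⟨x, hx, h1, h2, h3, h4⟩ := exists_of_ae (elt (j+1)) (out2.and ((hv (j+1) hj).and (B5.and B4)))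
    have x0 : 0 < x := by linarith [hx.1, enn (j+1+1) (by omega)]
    have m1 := mul_lt_mul_of_pos_left hx.1 hl0
    have m2 := mul_lt_mul_of_pos_left hx.2 hl0
    have m3 := mul_pos hl0 x0
    have es0 := H.es j
    have es1 := H.es (j+1)
    have m5 : l * e (j+1) < l * e 0 := mul_lt_mul_of_pos_left (H.anti (by omega)) hl0
    have := h1 ⟨x0, by linarith [hx.2, H.ele (j+1)]⟩
    rw [h2 hx, h3 ⟨by linarith, by linarith⟩, h4 ⟨by linarith, by linarith⟩] at this
    linarith

end

theorem v_bound {l u0 u1 : ℝ} {M : ℕ} {v : ℕ → ℝ} (l0 : 0 < l) (l1 : l < 1/2) (h0 : 0 ≤ u0)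
    (hv0 : v 0 = u0 + l * (u1 + u0))
    (hv : ∀ j, j + 1 < M → v (j+1) = u0 + l * (v j + u0)) :
    ∀ j < M, v j ≤ 3 * u0 + l ^ (j+1) * u1 := by
  intro j
  induction j with
  | zero => intro _; rw [hv0]; simp; nlinarith
  | succ j ih =>
    intro hj
    rw [hv j hj]
    have := mul_le_mul_of_nonneg_left (ih (by omega)) l0.le
    have h2 : l * u0 ≤ 1/2 * u0 := mul_le_mul_of_nonneg_right l1.le h0
    have h3 : l ^ (j+1+1) * u1 = l * (l^(j+1) * u1) := by ring
    rw [h3]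
    nlinarith

theorem locate {e : ℕ → ℝ} {M : ℕ} (eM : e M = 0) (x : ℝ) (hx0 : 0 < x) (hx : x < e 0) 
    (hne : ∀ j, x ≠ e j) : ∃ j < M, x ∈ Set.Ioo (e (j+1)) (e j) := by
  induction M generalizing e with
  | zero => rw [eM] at hx; linarith
  | succ M ih =>
    rcases lt_or_gt_of_ne (hne 1) with h | h
    · obtain ⟨j, hj, h'⟩ := ih (e := fun j => e (j+1)) eM h (fun j => hne _)
      exact ⟨j+1, by omega, h'⟩
    · exact ⟨0, by omega, h, hx⟩

/-- The critical orbit. -/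
noncomputable def EE (r a : ℝ) (j : ℕ) : ℝ :=
  1/2 - r*a/(1+a) - (2+a)^j * (r*a*a*(2+a)/(1+a))

theorem exists_params (r η : ℝ) (hr : 1 ≤ r) (hη : 0 < η) :
    ∃ a : ℝ, ∃ M : ℕ, 0 < a ∧ a ≤ η ∧ EE r a M = 0 := by
  obtain ⟨M, hM⟩ := pow_unbounded_of_one_lt (1 / (r*η*η*(2+η)/(1+η))) (show (1:ℝ) < 2 by norm_num)
  have hpos : 0 < r*η*η*(2+η)/(1+η) := by positivity
  rw [div_lt_iff₀ hpos] at hM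
  have hc : ContinuousOn (fun a => EE r a M) (Set.Icc 0 η) := by
    unfold EE
    have : ∀ a ∈ Set.Icc 0 η, 1 + a ≠ 0 := fun a ha => by linarith [ha.1]
    fun_prop (disch := assumption)
  have h0 : EE r 0 M = 1/2 := by simp [EE]
  have h1 : EE r η M < 0 := by
    unfold EE
    have : (2:ℝ)^M ≤ (2+η)^M := by gcongr; linarith
    have h2 := mul_le_mul_of_nonneg_right this hpos.le
    have h3 : 0 ≤ r*η/(1+η) := by positivity
    linarith
  obtain ⟨a, ha, hEa⟩ := intermediate_value_Icc' hη.le hc (show (0:ℝ) ∈ Set.Icc _ _ from ⟨h1.le, by rw [h0]; norm_num⟩)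
  refine ⟨a, M, lt_of_le_of_ne ha.1 ?_, ha.2, hEa⟩
  rintro rfl
  simp only [h0] at hEa
  norm_num at hEa

theorem Wmap_eq_max {r a : ℝ} (ha : 0 ≤ a) (hra0 : 0 ≤ r * a) (hra : r * a < 1/2) (x : ℝ) :
    Wmap 2 2 1 1 r a x = if x < 1/2 then
      max (1 - (2*(2 + a)/(1 + a - 2*(r*a))) * x) ((2 + a)*(x - 1/2) + 1/2 + r*a) else
      max (-(2 + a)*(x - 1/2) + 1/2 + r*a) (1 + (2*(2 + a)/(1 + a - 2*(r*a))) * (x - 1)) := by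
  have hs : 0 < 2 + a := by linarith
  have hD : 0 < 1 + a - 2*(r*a) := by linarith
  have hS : 0 < 2*(2 + a)/(1 + a - 2*(r*a)) := by positivity
  have hb : 1/2 - (1/2 + r*a)/(2 + 1*a) = 1 / (2*(2 + a)/(1 + a - 2*(r*a))) := by
    field_simp; ring
  have hb2 : 1/2 + (1/2 + r*a)/(2 + 1*a) = 1 - 1 / (2*(2 + a)/(1 + a - 2*(r*a))) := by
    field_simp; ring
  have h12 : 1 / (2*(2 + a)/(1 + a - 2*(r*a))) < 1/2 := by
    rw [← hb]
    have : 0 < (1/2 + r*a)/(2 + 1*a) := by positivity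
    linarith
  have hsb : (2 + a) * (1 / (2*(2 + a)/(1 + a - 2*(r*a)))) = (1 + a - 2*(r*a))/2 := by
    field_simp
  have hSb : (2*(2 + a)/(1 + a - 2*(r*a))) * (1 / (2*(2 + a)/(1 + a - 2*(r*a)))) = 1 :=
    mul_one_div_cancel hS.ne'
  unfold Wmap
  rw [hb, hb2]
  have e1 : (2:ℝ) - 1 + 1 * a - 2 * r * a = 1 + a - 2*(r*a) := by ring
  rw [e1, one_mul]
  generalize hSS : 2*(2 + a)/(1 + a - 2*(r*a)) = S at *
  generalize hbb : 1 / S = b at *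
  by_cases h1 : x < b
  · have : x < 1/2 := by linarith
    rw [if_pos h1, if_pos this, max_eq_left]
    have := mul_lt_mul_of_pos_left h1 hS
    have := mul_lt_mul_of_pos_left h1 hs
    linarith
  · rw [if_neg h1]
    by_cases h2 : x < 1/2
    · rw [if_pos h2, if_pos h2, max_eq_right]
      have := mul_le_mul_of_nonneg_left (not_lt.1 h1) hS.le
      have := mul_le_mul_of_nonneg_left (not_lt.1 h1) hs.le
      linarith
    · rw [if_neg h2, if_neg h2]
      by_cases h3 : x < 1 - b
      · rw [if_pos h3, max_eq_left]
        have := mul_lt_mul_of_pos_left h3 hS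
        have := mul_lt_mul_of_pos_left h3 hs
        linarith
      · rw [if_neg h3, max_eq_right]
        have := mul_le_mul_of_nonneg_left (not_lt.1 h3) hS.le
        have := mul_le_mul_of_nonneg_left (not_lt.1 h3) hs.le
        linarith

theorem mkWH {r a : ℝ} {M : ℕ} (hr : 1 ≤ r) (ha : 0 < a) (ha4 : a ≤ 1/4) (hra : r * a ≤ 1/4)
    (hM : EE r a M = 0) :
    WH (Wmap 2 2 1 1 r a) ((1 + a - 2*(r*a))/(2*(2+a))) (1/(2+a)) (1/2 + r*a) M (EE r a) := by
  have hs : 0 < 2 + a := by linarith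
  have hra0 : 0 < r * a := by positivity
  have hD : 0 < 1 + a - 2*(r*a) := by linarith
  have hS : 0 < 2*(2 + a)/(1 + a - 2*(r*a)) := by positivity
  have hb : 1/2 - (1/2 + r*a)/(2 + 1*a) = (1 + a - 2*(r*a))/(2*(2+a)) := by
    field_simp; ring
  have hb2 : 1/2 + (1/2 + r*a)/(2 + 1*a) = 1 - (1 + a - 2*(r*a))/(2*(2+a)) := by
    field_simp; ring
  have h13 : (1 + a - 2*(r*a))/(2*(2+a)) ≤ 1/3 := by
    rw [div_le_div_iff₀ (by positivity) (by norm_num)]; linarith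
  have e1 : (2:ℝ) - 1 + 1 * a - 2 * r * a = 1 + a - 2*(r*a) := by ring
  refine ⟨?_, by positivity, h13, by positivity, ?_, by linarith, ?_, ?_, ?_, ?_, ?_, hM, ?_, ?_, ?_, ?_, ?_⟩
  · unfold Wmap
    refine Measurable.ite measurableSet_Iio (by fun_prop) (Measurable.ite measurableSet_Iio (by fun_prop)
      (Measurable.ite measurableSet_Iio (by fun_prop) (by fun_prop)))
  · rw [div_lt_div_iff₀ hs (by norm_num)]; linarith
  · rw [← hb2]
    have : r * a < (1/2 + r*a)/(2+1*a) := by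
      rw [lt_div_iff₀ (by linarith)]; nlinarith
    linarith
  · field_simp; ring
  · intro j
    unfold EE
    rw [pow_succ]
    field_simp; ring
  · unfold EE
    field_simp; ring
  · apply strictAnti_nat_of_succ_lt
    intro j
    unfold EE
    have : 0 < r*a*a*(2+a)/(1+a) := by positivity
    have h2 : (2+a)^j < (2+a)^(j+1) := pow_lt_pow_right₀ (by linarith) (by omega)
    have := mul_lt_mul_of_pos_right h2 this
    linarith
  · unfold EE
    have : 0 < r*a*a*(2+a)/(1+a) := by positivity
    have : 0 < r*a/(1+a) := by positivity
    simp; linarith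
  · intro u h0 h1
    rw [Wmap, hb, if_pos h1, e1]
    generalize 1 + a - 2*(r*a) = D at hD
    field_simp; ring
  · intro u h0 h1
    rw [Wmap, hb, if_neg (not_lt_of_gt h0), if_pos h1]
    field_simp; ring
  · intro u h0 h1
    rw [Wmap, hb, hb2, if_neg (not_lt_of_gt (by linarith)), if_neg (not_lt_of_gt h0), if_pos h1]
    field_simp; ring
  · intro u h0 h1
    rw [Wmap, hb, hb2, if_neg (not_lt_of_gt (by linarith)), if_neg (not_lt_of_gt (by linarith)), 
      if_neg (not_lt_of_gt h0), e1]
    generalize 1 + a - 2*(r*a) = D at hD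
    field_simp; ring

theorem main_bound {r a : ℝ} {M : ℕ} (hr : 1 ≤ r) (ha : 0 < a) (ha4 : a ≤ 1/4) (hra : r * a ≤ 1/4)
    (hM : EE r a M = 0) (μ : Measure ℝ) (h : ℝ → ℝ) (hμ : IsProbabilityMeasure μ)
    (hμh : μ = (volume.restrict (Set.Icc (0:ℝ) 1)).withDensity (fun x => ENNReal.ofReal (h x)))
    (hinv : ∀ A : Set ℝ, MeasurableSet A → μ (Wmap 2 2 1 1 r a ⁻¹' A) = μ A)
    (ε : ℝ) (hε : 0 < ε) (hae : r * a ≤ ε/2) :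
    μ {x | ε ≤ |x - 1/2|} ≤ ENNReal.ofReal (9/(4*r)) := by
  have H := mkWH hr ha ha4 hra hM
  have hs : 0 < 2 + a := by linarith
  have hra0 : 0 < r * a := by positivity
  set g := (1 + a - 2*(r*a))/(2*(2+a)) with hg
  set l := 1/(2+a) with hl
  set ν : Measure ℝ := volume.restrict (Set.Ioo (0:ℝ) 1) with hν
  have hac : μ ≪ ν := by
    rw [hμh, hν, Measure.restrict_congr_set (Ioo_ae_eq_Icc (a := (0:ℝ)) (b := 1))]
    exact withDensity_absolutelyContinuous _ _
  set f : ℝ → ℝ := fun x => (μ.rnDeriv ν x).toReal with hf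
  have hfm : Measurable f := (Measure.measurable_rnDeriv μ ν).ennreal_toReal
  have hf0 : ∀ x, 0 ≤ f x := fun x => ENNReal.toReal_nonneg
  have hfi : Integrable f ν := Measure.integrable_toReal_rnDeriv
  have hμf : μ = ν.withDensity (fun x => ENNReal.ofReal (f x)) := by
    conv_lhs => rw [← Measure.withDensity_rnDeriv_eq μ ν hac]
    apply withDensity_congr_ae
    filter_upwards [Measure.rnDeriv_lt_top μ ν] with x hx
    rw [ENNReal.ofReal_toReal hx.ne]
  have hμA : ∀ A, MeasurableSet A → μ A = ∫⁻ x in Set.Ioo 0 1 ∩ A, ENNReal.ofReal (f x) := by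
    intro A hA
    conv_lhs => rw [hμf]
    rw [withDensity_apply _ hA, hν, Measure.restrict_restrict hA, Set.inter_comm]
  have hP := H.inv f hfm hf0 (fun A hA => by rw [← hμA _ (H.hW hA), ← hμA _ hA, hinv A hA])
  obtain ⟨u0, u1, v, p0, p1, q1, q2, q3, c0, c1, c2⟩ := H.values f hfm hf0 hfi hP
  have hls : l * (2 + a) = 1 := by rw [hl]; field_simp
  have hl0 := H.l0
  have hu1 : a * u1 = (2 + a) * u0 := by
    have : (2+a) * u1 = (2+a)*u0 + 2 * (l*(2+a)) * u1 := by
      nth_rewrite 1 [q1]; ring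
    rw [hls] at this; linarith
  have hvb := v_bound H.l0 H.l1 p0 q2 q3
  -- mass
  have hE0 : EE r a 0 = 1/2 - r*a*(1+a) := by unfold EE; field_simp; ring
  have E0nn : 0 ≤ EE r a 0 := by rw [← hM]; exact H.anti.antitone (Nat.zero_le _)
  have mass : u1 * (r * a * (2 + a)) ≤ 1 := by
    have h1 : μ (Set.Ioo (EE r a 0) (1/2 + r*a)) ≤ 1 := prob_le_one
    have hsub : Set.Ioo (EE r a 0) (1/2 + r*a) ⊆ Set.Ioo 0 1 := 
      Set.Ioo_subset_Ioo E0nn (by linarith)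
    rw [hμA _ measurableSet_Ioo, Set.inter_eq_right.2 hsub] at h1
    rw [setLIntegral_congr_fun_ae (g := fun _ => ENNReal.ofReal u1) measurableSet_Ioo (by
      filter_upwards [c1] with x hx hx'
      rw [hx hx'])] at h1
    rw [setLIntegral_const, Real.volume_Ioo, ← ENNReal.ofReal_mul p1] at h1
    have := ENNReal.ofReal_le_one.1 h1
    rw [hE0] at this
    linarith
  have hu0 : u0 ≤ 1/(4*r) := by
    rw [le_div_iff₀ (by positivity)]
    have h1 : u1 * (r * a * (2+a)) = r * (2+a) * (a * u1) := by ring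
    rw [h1, hu1] at mass
    have h2 : 4 * (r * u0) ≤ (2+a)^2 * (r * u0) := by
      apply mul_le_mul_of_nonneg_right _ (by positivity); nlinarith
    linarith
  -- pointwise bound
  have pt : ∀ᵐ x, x ∈ Set.Ioo 0 1 ∩ {x : ℝ | ε ≤ |x - 1/2|} → ENNReal.ofReal (f x) ≤ ENNReal.ofReal (9/(4*r)) := by
    have c2' : ∀ᵐ x, ∀ j, j < M → x ∈ Set.Ioo (EE r a (j+1)) (EE r a j) → f x = v j := by
      rw [ae_all_iff]; intro j
      by_cases hj : j < M
      · filter_upwards [c2 j hj] with x hx _ using hx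
      · exact ae_of_all _ (fun x h => absurd h hj)
    have n1 : ∀ᵐ x : ℝ, ∀ j, x ≠ EE r a j := by
      rw [ae_all_iff]; intro j
      simp [ae_iff]
    filter_upwards [c0, c2', n1] with x h0 h2 hn hx
    obtain ⟨⟨x0, x1⟩, hx⟩ := hx
    simp only [Set.mem_ofPred_eq] at hx
    apply ENNReal.ofReal_le_ofReal
    have h9 : 9 * u0 ≤ 9/(4*r) := by
      have : 9/(4*r) = 9 * (1/(4*r)) := by ring
      rw [this]; linarith
    refine le_trans ?_ h9
    rcases le_abs.1 hx with hx | hx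
    · rw [h0 ⟨by linarith, x1⟩]; linarith
    · have : x < EE r a 0 := by
        rw [hE0]; nlinarith
      obtain ⟨j, hj, hxj⟩ := locate hM x x0 this hn
      rw [h2 j hj hxj]
      refine (hvb j hj).trans ?_
      have hlow : ε/2 ≤ (2+a)^(j+1) * (r*a*a*(2+a)/(1+a)) := by
        have h1 := hxj.1
        unfold EE at h1
        have : r*a/(1+a) ≤ r * a := div_le_self hra0.le (by linarith)
        linarith
      have hd : r*a*a*(2+a)/(1+a) ≤ 2*(r*a)*a := by
        rw [div_le_iff₀ (by linarith)]; nlinarith [mul_pos hra0 ha]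
      have hd2 : r*a*a*(2+a)/(1+a) ≤ ε * a := hd.trans (by nlinarith)
      have hp : 0 < (2+a)^(j+1) := by positivity
      have hlow2 : ε/2 ≤ (2+a)^(j+1) * (ε * a) := hlow.trans (mul_le_mul_of_nonneg_left hd2 hp.le)
      have hlow3 : 1/2 ≤ (2+a)^(j+1) * a := by
        by_contra hcon
        push Not at hcon
        have := mul_lt_mul_of_pos_left hcon hε
        linarith
      have hlp : l^(j+1) * (2+a)^(j+1) = 1 := by rw [← mul_pow, hls, one_pow]
      have hlp0 : 0 < l^(j+1) := by positivity
      have hl2 : l^(j+1) ≤ 2 * a := by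
        have := mul_le_mul_of_nonneg_left hlow3 hlp0.le
        rw [← mul_assoc, hlp] at this; linarith
      have := mul_le_mul_of_nonneg_right hl2 p1
      have h3 : 2 * a * u1 = 2 * ((2 + a) * u0) := by rw [← hu1]; ring
      nlinarith
  have hmeas : MeasurableSet {x : ℝ | ε ≤ |x - 1/2|} := measurableSet_le (by fun_prop) (by fun_prop)
  rw [hμA _ hmeas]
  calc _ ≤ ∫⁻ x in Set.Ioo 0 1 ∩ {x : ℝ | ε ≤ |x - 1/2|}, ENNReal.ofReal (9/(4*r)) := 
        setLIntegral_mono_ae' (measurableSet_Ioo.inter hmeas) pt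
    _ ≤ ∫⁻ x in Set.Ioo (0:ℝ) 1, ENNReal.ofReal (9/(4*r)) := lintegral_mono_set Set.inter_subset_left
    _ = _ := by rw [setLIntegral_const]; simp

/-- The example of Section 4: with `s₁ = s₂ = 2`, `p = q = 1`, `rₙ = n`, there are
`aₙ → 0⁺` with `rₙaₙ < 1/2` such that the maps `τₙ = W_{aₙ,rₙ}` are piecewise linear with
all slopes `> 2` in modulus, converge to `W₀`, while their acims (supported on all of
`[0,1]`) converge *-weakly to the Dirac measure `δ_{1/2}`; consequently the corresponding
invariant densities have no uniform positive lower bound. -/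
theorem Wmap_example_no_uniform_lower_bound :
    ∃ a : ℕ → ℝ,
      (∀ n : ℕ, 1 ≤ n → 0 < a n ∧ (n : ℝ) * a n < 1/2) ∧
      Tendsto a atTop (𝓝 0) ∧
      (∀ n : ℕ, 1 ≤ n →
        (2 < |2*(2 + a n)/(2 - 1 + a n - 2*(n:ℝ)*a n)| ∧
         2 < |(2 + a n)| ∧
         2 < |-(2 + a n)| ∧
         2 < |2*(2 + a n)/(2 - 1 + a n - 2*(n:ℝ)*a n)|)) ∧
      (∀ x ∈ Set.Icc (0:ℝ) 1,
        Tendsto (fun n : ℕ => Wmap 2 2 1 1 (n:ℝ) (a n) x) atTop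
          (𝓝 (Wmap 2 2 1 1 1 0 x))) ∧
      ∀ μ : ℕ → Measure ℝ, ∀ h : ℕ → ℝ → ℝ,
        (∀ n : ℕ, 1 ≤ n →
          IsProbabilityMeasure (μ n) ∧
          μ n = (volume.restrict (Set.Icc (0:ℝ) 1)).withDensity
                  (fun x => ENNReal.ofReal (h n x)) ∧
          (∀ A : Set ℝ, MeasurableSet A →
            μ n (Wmap 2 2 1 1 (n:ℝ) (a n) ⁻¹' A) = μ n A) ∧
          (∀ U : Set ℝ, IsOpen U → (U ∩ Set.Icc (0:ℝ) 1).Nonempty → 0 < μ n U)) →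
        ((∀ g : ℝ → ℝ, Continuous g →
            Tendsto (fun n : ℕ => ∫ x, g x ∂(μ n)) atTop (𝓝 (g (1/2)))) ∧
         ¬ ∃ c > (0:ℝ), ∀ n : ℕ, 1 ≤ n →
            ∀ᵐ x ∂(volume.restrict (Set.Icc (0:ℝ) 1)), c ≤ h n x) := by
  have ex : ∀ n : ℕ, ∃ a : ℝ, ∃ M : ℕ, 1 ≤ n → 0 < a ∧ a ≤ 1/(4*(n:ℝ)^2) ∧ EE n a M = 0 := by
    intro n
    by_cases hn : 1 ≤ n
    · have hn' : (1:ℝ) ≤ n := by exact_mod_cast hn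
      obtain ⟨a, M, h⟩ := exists_params n (1/(4*(n:ℝ)^2)) hn' (by positivity)
      exact ⟨a, M, fun _ => h⟩
    · exact ⟨0, 0, fun h => absurd h hn⟩
  choose a M haM using ex
  have hnp : ∀ n : ℕ, 1 ≤ n → (1:ℝ) ≤ n := fun n hn => by exact_mod_cast hn
  have hna : ∀ n : ℕ, 1 ≤ n → (n:ℝ) * a n ≤ 1/(4*(n:ℝ)) := by
    intro n hn
    have h1 := hnp n hn
    have h2 := mul_le_mul_of_nonneg_left (haM n hn).2.1 (by linarith : (0:ℝ) ≤ n)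
    refine h2.trans (le_of_eq ?_)
    field_simp
  have h14 : ∀ n : ℕ, 1 ≤ n → 1/(4*(n:ℝ)) ≤ 1/4 := by
    intro n hn
    have h1 := hnp n hn
    apply one_div_le_one_div_of_le (by norm_num); linarith
  have hna4 : ∀ n : ℕ, 1 ≤ n → (n:ℝ) * a n ≤ 1/4 := fun n hn => (hna n hn).trans (h14 n hn)
  have haa : ∀ n : ℕ, 1 ≤ n → a n ≤ n * a n := fun n hn => by
    nlinarith [hnp n hn, (haM n hn).1]
  have ha4 : ∀ n : ℕ, 1 ≤ n → a n ≤ 1/4 := fun n hn => (haa n hn).trans (hna4 n hn)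
  have hlim : Tendsto (fun n : ℕ => 1/(4*(n:ℝ))) atTop (𝓝 0) := by
    have := (tendsto_one_div_atTop_nhds_zero_nat (𝕜 := ℝ)).const_mul (1/4)
    simp only [mul_zero] at this
    refine this.congr (fun n => ?_)
    rw [one_div_mul_one_div]
  have hnalim : Tendsto (fun n : ℕ => (n:ℝ) * a n) atTop (𝓝 0) := by
    refine tendsto_of_tendsto_of_tendsto_of_le_of_le' tendsto_const_nhds hlim ?_ ?_
    · filter_upwards [eventually_ge_atTop 1] with n hn
      exact mul_nonneg (by positivity) (haM n hn).1.le
    · filter_upwards [eventually_ge_atTop 1] with n hn using hna n hn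
  have halim : Tendsto a atTop (𝓝 0) := by
    refine tendsto_of_tendsto_of_tendsto_of_le_of_le' tendsto_const_nhds hnalim ?_ ?_
    · filter_upwards [eventually_ge_atTop 1] with n hn using (haM n hn).1.le
    · filter_upwards [eventually_ge_atTop 1] with n hn using haa n hn
  refine ⟨a, fun n hn => ⟨(haM n hn).1, by linarith [hna4 n hn]⟩, halim, ?_, ?_, ?_⟩
  · intro n hn
    have h0 := (haM n hn).1
    have h1 := hna4 n hn
    have h2 := hnp n hn
    have h3 : 0 < n * a n := by positivity
    have e1 : 2 - 1 + a n - 2*(n:ℝ)*a n = 1 + a n - 2 * (n * a n) := by ring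
    have hs : 2 < |2*(2 + a n)/(2 - 1 + a n - 2*(n:ℝ)*a n)| := by
      rw [e1]
      refine lt_of_lt_of_le ?_ (le_abs_self _)
      rw [lt_div_iff₀ (by linarith)]; linarith
    have ht : 2 < |2 + a n| := lt_of_lt_of_le (by linarith) (le_abs_self _)
    exact ⟨hs, ht, by rwa [abs_neg], hs⟩
  · intro x _
    have e0 := Wmap_eq_max (r := 1) (a := 0) le_rfl (by norm_num) (by norm_num) x
    rw [e0]
    have hev : (fun n : ℕ => if x < 1/2 then
      max (1 - (2*(2 + a n)/(1 + a n - 2*(n*a n))) * x) ((2 + a n)*(x - 1/2) + 1/2 + n*a n) else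
      max (-(2 + a n)*(x - 1/2) + 1/2 + n*a n) (1 + (2*(2 + a n)/(1 + a n - 2*(n*a n))) * (x - 1)))
        =ᶠ[atTop] (fun n : ℕ => Wmap 2 2 1 1 (n:ℝ) (a n) x) := by
      filter_upwards [eventually_ge_atTop 1] with n hn
      rw [Wmap_eq_max (haM n hn).1.le (mul_nonneg (by positivity) (haM n hn).1.le) (by linarith [hna4 n hn])]
    refine Tendsto.congr' hev ?_
    have hs : Tendsto (fun n => 2 + a n) atTop (𝓝 (2 + 0)) := halim.const_add 2
    have hD : Tendsto (fun n => 1 + a n - 2*(n*a n)) atTop (𝓝 (1 + 0 - 2*(1*0))) := by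
      have := (halim.const_add 1).sub (hnalim.const_mul 2)
      simpa using this
    have hS : Tendsto (fun n => 2*(2 + a n)/(1 + a n - 2*(n*a n))) atTop 
        (𝓝 (2*(2+0)/(1 + 0 - 2*(1*0)))) := (hs.const_mul 2).div hD (by norm_num)
    have hnalim' : Tendsto (fun n : ℕ => (n:ℝ) * a n) atTop (𝓝 (1 * 0)) := by simpa using hnalim
    split_ifs
    · exact ((hS.mul_const x).const_sub 1).max (((hs.mul_const _).add_const _).add hnalim')
    · exact (((hs.neg.mul_const _).add_const _).add hnalim').max ((hS.mul_const _).const_add 1)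
  · intro μ h hyp
    have key : ∀ ε > 0, ∀ᶠ n : ℕ in atTop, 1 ≤ n ∧ μ n {x | ε ≤ |x - 1/2|} ≤ ENNReal.ofReal (9/(4*(n:ℝ))) := by
      intro ε hε
      filter_upwards [eventually_ge_atTop 1, hnalim.eventually (gt_mem_nhds (half_pos hε))] with n hn hn2
      obtain ⟨i1, i2, i3, -⟩ := hyp n hn
      exact ⟨hn, main_bound (hnp n hn) (haM n hn).1 (ha4 n hn) (hna4 n hn) (haM n hn).2.2 (μ n) (h n) i1 i2 i3 ε hε hn2.le⟩
    have h9 : Tendsto (fun n : ℕ => 9/(4*(n:ℝ))) atTop (𝓝 0) := by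
      have := hlim.const_mul 9
      simp only [mul_zero] at this
      refine this.congr (fun n => ?_)
      ring
    refine ⟨?_, ?_⟩
    · intro G hG
      obtain ⟨B, hB⟩ := isCompact_Icc.exists_bound_of_continuousOn (s := Set.Icc (0:ℝ) 1) 
        (f := fun x => G x - G (1/2)) (by fun_prop)
      have hB0 : 0 ≤ B := (norm_nonneg _).trans (hB 0 (by simp))
      rw [Metric.tendsto_atTop']
      intro η hη
      obtain ⟨ε, hε, hGε⟩ := Metric.continuousAt_iff.1 (hG.continuousAt (x := (1/2:ℝ))) (η/2) (half_pos hη)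
      have hev : ∀ᶠ n : ℕ in atTop, B * (9/(4*(n:ℝ))) < η/2 := by
        have := h9.const_mul B
        rw [mul_zero] at this
        exact this.eventually (gt_mem_nhds (half_pos hη))
      obtain ⟨N, hN⟩ := eventually_atTop.1 ((key ε hε).and hev)
      refine ⟨N, fun n hn => ?_⟩
      obtain ⟨⟨n1, hn2⟩, hn3⟩ := hN n hn.le
      obtain ⟨i1, i2, i3, -⟩ := hyp n n1
      have hsupp : ∀ᵐ x ∂(μ n), x ∈ Set.Icc (0:ℝ) 1 := by
        rw [i2]
        exact (withDensity_absolutelyContinuous _ _) (ae_restrict_mem measurableSet_Icc)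
      have hmeas : MeasurableSet {x : ℝ | ε ≤ |x - 1/2|} := measurableSet_le (by fun_prop) (by fun_prop)
      have hreal : (μ n).real {x | ε ≤ |x - 1/2|} ≤ 9/(4*(n:ℝ)) :=
        ENNReal.toReal_le_of_le_ofReal (by positivity) hn2
      have hbd : ∀ᵐ x ∂(μ n), ‖G x - G (1/2)‖ ≤ B := by
        filter_upwards [hsupp] with x hx using hB x hx
      have hint : Integrable (fun x => G x - G (1/2)) (μ n) :=
        Integrable.of_bound (by fun_prop) B hbd
      have hGi : Integrable G (μ n) := by
        have := hint.add (integrable_const (G (1/2)))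
        refine this.congr (ae_of_all _ (fun x => by simp))
      have heq : ∫ x, G x ∂(μ n) - G (1/2) = ∫ x, (G x - G (1/2)) ∂(μ n) := by
        rw [integral_sub hGi (integrable_const _)]; simp
      rw [Real.dist_eq, heq, ← Real.norm_eq_abs]
      have hind : Integrable (Set.indicator {x : ℝ | ε ≤ |x - 1/2|} (fun _ => B)) (μ n) :=
        (integrable_const B).indicator hmeas
      calc ‖∫ x, (G x - G (1/2)) ∂(μ n)‖ 
          ≤ ∫ x, (η/2 + Set.indicator {x : ℝ | ε ≤ |x - 1/2|} (fun _ => B) x) ∂(μ n) := by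
            apply norm_integral_le_of_norm_le ((integrable_const _).add hind)
            filter_upwards [hbd] with x hx
            show ‖G x - G (1/2)‖ ≤ η/2 + Set.indicator {x : ℝ | ε ≤ |x - 1/2|} (fun _ => B) x
            by_cases hxe : ε ≤ |x - 1/2|
            · rw [Set.indicator_of_mem (by exact hxe)]; linarith
            · rw [Set.indicator_of_notMem (by exact hxe), add_zero]
              have := hGε (x := x) (by rw [Real.dist_eq]; linarith)
              rw [Real.dist_eq] at this
              exact this.le
        _ = η/2 + (μ n).real {x | ε ≤ |x - 1/2|} * B := by
            rw [integral_add (integrable_const _) hind, integral_indicator_const _ hmeas]; simp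
        _ ≤ η/2 + (9/(4*(n:ℝ))) * B := by gcongr
        _ < η := by linarith
    · rintro ⟨c, hc, hch⟩
      have hev : ∀ᶠ n : ℕ in atTop, 9/(4*(n:ℝ)) < c * (1/4) := h9.eventually (gt_mem_nhds (by positivity))
      obtain ⟨n, ⟨n1, hn2⟩, hn3⟩ := ((key (1/4) (by norm_num)).and hev).exists
      obtain ⟨i1, i2, i3, -⟩ := hyp n n1
      have hlow : ENNReal.ofReal (c * (1/4)) ≤ μ n {x | 1/4 ≤ |x - 1/2|} := by
        have hsub : Set.Icc (3/4:ℝ) 1 ⊆ {x | 1/4 ≤ |x - 1/2|} := by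
          intro x hx
          have h1 := hx.1
          have h2 := le_abs_self (x - 1/2)
          show (1/4:ℝ) ≤ |x - 1/2|
          linarith
        refine le_trans ?_ (measure_mono hsub)
        rw [i2, withDensity_apply _ measurableSet_Icc, Measure.restrict_restrict measurableSet_Icc,
          Set.inter_eq_left.2 (Set.Icc_subset_Icc (by norm_num) le_rfl)]
        calc ENNReal.ofReal (c * (1/4)) = ∫⁻ x in Set.Icc (3/4:ℝ) 1, ENNReal.ofReal c := by
              rw [setLIntegral_const, Real.volume_Icc, ← ENNReal.ofReal_mul hc.le]; norm_num
          _ ≤ _ := by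
              apply lintegral_mono_ae
              have := ae_restrict_of_ae_restrict_of_subset (Set.Icc_subset_Icc (by norm_num : (0:ℝ) ≤ 3/4) le_rfl) (hch n n1)
              filter_upwards [this] with x hx using ENNReal.ofReal_le_ofReal hx
      have := hlow.trans hn2
      rw [ENNReal.ofReal_le_ofReal_iff (by positivity)] at this
      linarith
end
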